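/- arXiv:1911.12108 — 2 statements merged into one kernel-verified Lean document; each statement's English description precedes it below -/
import Mathlib

section
/- Let n ≥ 3 and suppose that initial segments I of the balanced order maximise |S(I)| among down-sets in X_{n−1} of given size. Then for every finite down-set A ⊆ X_n and every i ∈ {1,…,n}, the balanced-i-compression A' = 𝒞𝒞_i(A) satisfies: (i) A' is a down-set; (ii) |S(A')| ≥ |S(A)|; (iii) if additionally initial segments of the balanced order minimise the gap among subsets of X_{n−1} of given size, then gap(A') ≤ gap(A). -/
/-!
Slice a set `A ⊆ X_n` in direction `i`: a point with `i`-th coordinate `a` either has another zero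
coordinate, and is counted by `L_a`, or has `a = 0` and all other coordinates positive, and is
counted by `K`.

The balanced order is a total order extending the coordinatewise order, so its initial segments
are nested down-sets; and if `I` is an initial segment, then `S(I)` is an initial segment of the
positive points (`SSet_initial`).

* `A'` is a down-set: the sizes `|L_a|` decrease in `a`, so the segments `L'_a` are nested. Since
  `A` is a down-set, `K ⊆ S(L_0)`, whence `|K'| = |K| ≤ |S(L_0)| ≤ |S(L'_0)|`. Both `K'` and
  `S(L'_0)` are initial segments, so `K' ⊆ S(L'_0)`, which is what is needed for the points
  below `K'`.
* `|S(A)| = ∑_{a > 0} |K ∩ S(L_a)|` (`ncard_SSet_eq`). Each term is at most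
  `min (|K|, |S(L_a)|) ≤ min (|K'|, |S(L'_a)|)`, and the latter equals `|K' ∩ S(L'_a)|` because
  `K'` and `S(L'_a)` are nested.
* For a down-set, `|π_j A|` is the number of points with `x j = 0`; slicing gives
  `gap A = |L_0| + ∑_a gap L_a` (`gap_eq`), and the terms are compared one at a time.
-/

namespace ProjWA

variable {ι : Type*}

/-- `A ⊆ ℤ^ι` is a weak antichain if it contains no `x, y` with `x i < y i` for every `i`. -/
def IsWeakAntichain [Fintype ι] (A : Finset (ι → ℤ)) : Prop :=
  ∀ x ∈ A, ∀ y ∈ A, ¬ ∀ i, x i < y i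

/-- The projection deleting the coordinate `i`. -/
def projFun [DecidableEq ι] (i : ι) (x : ι → ℤ) : {j : ι // j ≠ i} → ℤ :=
  fun j => x j.1

/-- The image of a finite set under the projection deleting coordinate `i`. -/
def proj [Fintype ι] [DecidableEq ι] (i : ι) (A : Finset (ι → ℤ)) :
    Finset ({j : ι // j ≠ i} → ℤ) :=
  A.image (projFun i)

/-- `gap A = Σ_i |π_i(A)| - |A|`. -/
def gap [Fintype ι] [DecidableEq ι] (A : Finset (ι → ℤ)) : ℤ :=
  (∑ i : ι, ((proj i A).card : ℤ)) - A.card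

/-- `X_n`: the set of points of `ℤ_{≥0}^ι` having at least one coordinate equal to zero. -/
def XSet (ι : Type*) : Set (ι → ℤ) :=
  {x | (∀ i, 0 ≤ x i) ∧ ∃ i, x i = 0}

/-- A down-set in `ℤ_{≥0}^ι`. -/
def IsDownSet (A : Finset (ι → ℤ)) : Prop :=
  ∀ x y : ι → ℤ, (∀ i, 0 ≤ x i) → (∀ i, x i ≤ y i) → y ∈ A → x ∈ A

/-- The `i`-th bottom layer `B_i(A)`. -/
def bottomLayer [Fintype ι] [DecidableEq ι] (i : ι) (A : Finset (ι → ℤ)) : Finset (ι → ℤ) :=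
  A.filter fun x => ∀ y ∈ A, (∀ j, j ≠ i → y j = x j) → x i ≤ y i

/-- The `i`-compression `C_i(A)`: each `x ∈ B_i(A)` is replaced by the point obtained
by setting its `i`-th coordinate to `0`. -/
def compress [Fintype ι] [DecidableEq ι] (i : ι) (A : Finset (ι → ℤ)) : Finset (ι → ℤ) :=
  (A \ bottomLayer i A) ∪ (bottomLayer i A).image fun x => Function.update x i 0

/-- `layersRest A k = A \ (A_1 ∪ ⋯ ∪ A_k)` where `A_i` are the layers of `A`. -/
def layersRest {n : ℕ} (A : Finset (Fin n → ℤ)) : ℕ → Finset (Fin n → ℤ)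
  | 0 => A
  | k + 1 =>
      layersRest A k \ (if h : k < n then bottomLayer ⟨k, h⟩ (layersRest A k) else ∅)

/-- The layers `A_1, …, A_n` of `A`, defined by `A_i = B_i(A \ (A_1 ∪ ⋯ ∪ A_{i-1}))`. -/
def layer {n : ℕ} (A : Finset (Fin n → ℤ)) (i : Fin n) : Finset (Fin n → ℤ) :=
  bottomLayer i (layersRest A i.1)

/-- `compressUpTo A k = C_k(C_{k-1}(⋯(C_1(A))⋯))`. -/
def compressUpTo {n : ℕ} (A : Finset (Fin n → ℤ)) : ℕ → Finset (Fin n → ℤ)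
  | 0 => A
  | k + 1 =>
      if h : k < n then compress ⟨k, h⟩ (compressUpTo A k) else compressUpTo A k

/-- The complete `i`-compression `𝒞_i(A)`: every line in direction `i` is replaced
by an initial segment of the same size. -/
def ccompress [Fintype ι] [DecidableEq ι] (i : ι) (A : Finset (ι → ℤ)) : Finset (ι → ℤ) :=
  A.biUnion fun x =>
    (Finset.range ((A.filter fun y => ∀ j, j ≠ i → y j = x j).card)).image fun a : ℕ =>
      Function.update x i (a : ℤ)

/-- The set `T = {i : x i ≠ y i}` of coordinates where `x` and `y` differ. -/
def diffSet [Fintype ι] (x y : ι → ℤ) : Finset ι :=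
  Finset.univ.filter fun i => x i ≠ y i

/-- The maximum value of `x` on a finite set of coordinates (`⊥` if the set is empty). -/
def maxOn (s : Finset ι) (x : ι → ℤ) : WithBot ℤ :=
  (s.image x).max

/-- The largest coordinate in `s` at which `x` attains its maximum over `s`. -/
def argmaxOn [LinearOrder ι] (s : Finset ι) (x : ι → ℤ) : WithBot ι :=
  (s.filter fun i => (x i : WithBot ℤ) = maxOn s x).max

/-- The balanced order: with `T = {i : x i ≠ y i}`, `x < y` iff the maximum of `x` on `T` is
smaller than that of `y` on `T`, or they are equal and the largest index where `x` attains
this maximum on `T` is smaller than the corresponding index for `y`. -/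
def balancedLT [Fintype ι] [LinearOrder ι] (x y : ι → ℤ) : Prop :=
  x ≠ y ∧
    (maxOn (diffSet x y) x < maxOn (diffSet x y) y ∨
      (maxOn (diffSet x y) x = maxOn (diffSet x y) y ∧
        argmaxOn (diffSet x y) x < argmaxOn (diffSet x y) y))

/-- `I` is an initial segment of the balanced order on `X_ι`. -/
def IsInitSeg [Fintype ι] [LinearOrder ι] (I : Finset (ι → ℤ)) : Prop :=
  ↑I ⊆ XSet ι ∧ ∀ x ∈ I, ∀ y ∈ XSet ι, balancedLT y x → y ∈ I

/-- `S(A) = {x ∈ ℤ_{>0}^ι : replacing any one coordinate of x by 0 gives an element of A}`. -/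
def SSet [DecidableEq ι] (A : Finset (ι → ℤ)) : Set (ι → ℤ) :=
  {x | (∀ k, 0 < x k) ∧ ∀ k, Function.update x k 0 ∈ A}

/-- Insert the value `a` at position `i`. -/
def insertAt [DecidableEq ι] (i : ι) (a : ℤ) (x : {j : ι // j ≠ i} → ℤ) : ι → ℤ :=
  fun j => if h : j = i then a else x ⟨j, h⟩

/-- `L^i_a(A)`: the elements of `X_{n-1}` which, after inserting the value `a` at
position `i`, give elements of `A`. -/
def Lset [Fintype ι] [DecidableEq ι] (i : ι) (a : ℤ) (A : Finset (ι → ℤ)) :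
    Finset ({j : ι // j ≠ i} → ℤ) :=
  (proj i (A.filter fun x => x i = a)).filter fun x' => ∃ j, x' j = 0

/-- `K^i(A)`: the elements of `ℤ_{>0}^{n-1}` which, after inserting a `0` at position `i`,
give elements of `A`. -/
def Kset [Fintype ι] [DecidableEq ι] (i : ι) (A : Finset (ι → ℤ)) :
    Finset ({j : ι // j ≠ i} → ℤ) :=
  (proj i (A.filter fun x => x i = 0)).filter fun x' => ∀ j, 0 < x' j

/-- `K` is an initial segment of `ℤ_{>0}^{n-1}` with respect to the order `≺` defined by
`x ≺ y` iff inserting a `0` at position `i` into `x` gives a smaller element of `X_n`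
(in the balanced order) than inserting a `0` at position `i` into `y`. -/
def IsKInitSeg [Fintype ι] [LinearOrder ι] (i : ι) (K : Finset ({j : ι // j ≠ i} → ℤ)) :
    Prop :=
  (∀ x ∈ K, ∀ j, 0 < x j) ∧
    ∀ x ∈ K, ∀ y : {j : ι // j ≠ i} → ℤ, (∀ j, 0 < y j) →
      balancedLT (insertAt i 0 y) (insertAt i 0 x) → y ∈ K

/-- `A_N = {x ∈ ℤ^n : 0 ≤ x_j ≤ N-1 for all j, and x_i = 0 for some i}`. -/
def ANbox (n N : ℕ) : Finset (Fin n → ℤ) :=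
  (Fintype.piFinset fun _ : Fin n => (Finset.range N).image fun k : ℕ => (k : ℤ)).filter
    fun x => ∃ i, x i = 0

/-- `g(n,m)`: the minimum of `gap A` over weak antichains `A` of size `m` in `ℤ^n`. -/
noncomputable def gMin (n m : ℕ) : ℝ :=
  sInf {r : ℝ | ∃ A : Finset (Fin n → ℤ), IsWeakAntichain A ∧ A.card = m ∧ (gap A : ℝ) = r}


/-! ### The balanced order -/

section Order

variable {κ : Type*} [Fintype κ] [LinearOrder κ]

/-- Working form of the balanced order: `x < y` exactly when some coordinate `p` where they differ
has `(y p, p)` lexicographically above every `(x j, j)` with `x j ≠ y j`. -/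
theorem balancedLT_iff (x y : κ → ℤ) :
    balancedLT x y ↔ ∃ p, x p ≠ y p ∧ ∀ j, x j ≠ y j → x j < y p ∨ (x j = y p ∧ j < p) := by
  have mem : ∀ j, j ∈ diffSet x y ↔ x j ≠ y j := fun j => by simp [diffSet]
  have le_maxOn : ∀ (z : κ → ℤ) j, x j ≠ y j → (z j : WithBot ℤ) ≤ maxOn (diffSet x y) z :=
    fun z j hj => Finset.le_max (Finset.mem_image_of_mem z ((mem j).2 hj))
  constructor
  · rintro ⟨hne, h⟩
    obtain ⟨j0, hj0⟩ := Function.ne_iff.1 hne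
    have hT : ((diffSet x y).image y).Nonempty := ⟨y j0, Finset.mem_image_of_mem y ((mem j0).2 hj0)⟩
    obtain ⟨m, hm⟩ := Finset.max_of_nonempty hT
    obtain ⟨q, hq, hqm⟩ := Finset.mem_image.1 (Finset.mem_of_max hm)
    have hF : ((diffSet x y).filter fun j => (y j : WithBot ℤ) = maxOn (diffSet x y) y).Nonempty :=
      ⟨q, Finset.mem_filter.2 ⟨hq, by rw [maxOn, hm, hqm]⟩⟩
    obtain ⟨p, hp⟩ := Finset.max_of_nonempty hF
    obtain ⟨hpT, hpm⟩ := Finset.mem_filter.1 (Finset.mem_of_max hp)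
    refine ⟨p, (mem p).1 hpT, fun j hj => ?_⟩
    have hxj := le_maxOn x j hj
    rcases h with h | ⟨h, h'⟩
    · left
      have := lt_of_le_of_lt hxj h
      rw [← hpm] at this
      exact_mod_cast this
    · rw [h, ← hpm] at hxj
      have hxj' : x j ≤ y p := by exact_mod_cast hxj
      rcases hxj'.lt_or_eq with hlt | heq
      · exact Or.inl hlt
      · refine Or.inr ⟨heq, ?_⟩
        have h1 : (j : WithBot κ) ≤ argmaxOn (diffSet x y) x :=
          Finset.le_max (Finset.mem_filter.2 ⟨(mem j).2 hj, by rw [heq, hpm, h]⟩)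
        have h2 : argmaxOn (diffSet x y) y = (p : WithBot κ) := hp
        have := lt_of_le_of_lt h1 h'
        rw [h2] at this
        exact_mod_cast this
  · rintro ⟨p, hp, h⟩
    refine ⟨Function.ne_iff.2 ⟨p, hp⟩, ?_⟩
    have hx : maxOn (diffSet x y) x ≤ (y p : WithBot ℤ) := by
      refine Finset.max_le fun a ha => ?_
      obtain ⟨j, hj, rfl⟩ := Finset.mem_image.1 ha
      rcases h j ((mem j).1 hj) with h | h
      · exact_mod_cast h.le
      · exact_mod_cast h.1.le
    have hy := le_maxOn y p hp
    rcases (hx.trans hy).lt_or_eq with hlt | heq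
    · exact Or.inl hlt
    · refine Or.inr ⟨heq, ?_⟩
      have hxe : maxOn (diffSet x y) x = (y p : WithBot ℤ) := le_antisymm hx (heq ▸ hy)
      have h1 : (p : WithBot κ) ≤ argmaxOn (diffSet x y) y :=
        Finset.le_max (Finset.mem_filter.2 ⟨(mem p).2 hp, by rw [← heq, hxe]⟩)
      refine lt_of_lt_of_le ?_ h1
      refine (Finset.sup_lt_iff (WithBot.bot_lt_coe p)).2 fun j hj => ?_
      obtain ⟨hjT, hjm⟩ := Finset.mem_filter.1 hj
      rw [hxe] at hjm
      have hjm' : x j = y p := by exact_mod_cast hjm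
      rcases h j ((mem j).1 hjT) with h | h
      · exact absurd hjm' h.ne
      · exact WithBot.coe_lt_coe.2 h.2

theorem balancedLT_total (x y : κ → ℤ) (hne : x ≠ y) : balancedLT x y ∨ balancedLT y x := by
  obtain ⟨j0, hj0⟩ := Function.ne_iff.1 hne
  have hT : (diffSet x y).Nonempty := ⟨j0, by simpa [diffSet] using hj0⟩
  obtain ⟨p, hpT, hp⟩ := Finset.exists_max_image (diffSet x y)
    (fun j => toLex (max (x j) (y j), j)) hT
  have hpne : x p ≠ y p := by simpa [diffSet] using hpT
  have key : ∀ j, x j ≠ y j →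
      max (x j) (y j) < max (x p) (y p) ∨ (max (x j) (y j) = max (x p) (y p) ∧ j ≤ p) := by
    intro j hj
    simpa [Prod.Lex.toLex_le_toLex] using hp j (by simpa [diffSet] using hj)
  rw [balancedLT_iff, balancedLT_iff]
  rcases lt_or_gt_of_ne hpne with hlt | hlt
  · refine Or.inl ⟨p, hpne, fun j hj => ?_⟩
    rcases key j hj with h | ⟨h, hjp⟩
    · left; omega
    · rcases hjp.lt_or_eq with h' | rfl
      · by_cases hx : x j = y p
        · exact Or.inr ⟨hx, h'⟩
        · left; omega
      · exact Or.inl hlt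
  · refine Or.inr ⟨p, hpne.symm, fun j hj => ?_⟩
    rcases key j hj.symm with h | ⟨h, hjp⟩
    · left; omega
    · rcases hjp.lt_or_eq with h' | rfl
      · by_cases hx : y j = x p
        · exact Or.inr ⟨hx, h'⟩
        · left; omega
      · exact Or.inl hlt

theorem balancedLT_of_le (x y : κ → ℤ) (hle : ∀ j, x j ≤ y j) (hne : x ≠ y) :
    balancedLT x y := by
  obtain ⟨j0, hj0⟩ := Function.ne_iff.1 hne
  obtain ⟨p, hpT, hp⟩ := Finset.exists_max_image (diffSet x y) y
    ⟨j0, by simpa [diffSet] using hj0⟩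
  refine (balancedLT_iff x y).2 ⟨p, by simpa [diffSet] using hpT, fun j hj => Or.inl ?_⟩
  exact lt_of_lt_of_le (lt_of_le_of_ne (hle j) hj) (hp j (by simpa [diffSet] using hj))

/-- Two initial segments of the balanced order restricted to the same ground set `X` are nested. -/
theorem initial_nested (X S T : Set (κ → ℤ)) (hSX : S ⊆ X) (hTX : T ⊆ X)
    (hS : ∀ x ∈ S, ∀ y ∈ X, balancedLT y x → y ∈ S)
    (hT : ∀ x ∈ T, ∀ y ∈ X, balancedLT y x → y ∈ T) : S ⊆ T ∨ T ⊆ S := by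
  by_contra! h
  obtain ⟨⟨x, hxS, hxT⟩, y, hyT, hyS⟩ := Set.not_subset.1 h.1, Set.not_subset.1 h.2
  have hne : x ≠ y := fun e => hxT (e ▸ hyT)
  rcases balancedLT_total x y hne with h | h
  · exact hxT (hT y hyT x (hSX hxS) h)
  · exact hyS (hS x hxS y (hTX hyT) h)

theorem initSeg_subset {I I' : Finset (κ → ℤ)} (hI : IsInitSeg I) (hI' : IsInitSeg I')
    (hc : I.card ≤ I'.card) : I ⊆ I' := by
  rcases initial_nested (XSet κ) I I' hI.1 hI'.1 hI.2 hI'.2 with h | h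
  · exact_mod_cast h
  · exact (Finset.eq_of_subset_of_card_le (by exact_mod_cast h) hc).symm.subset

theorem initSeg_downSet {I : Finset (κ → ℤ)} (hI : IsInitSeg I) : IsDownSet I := by
  intro x y hx hxy hy
  by_cases hne : x = y
  · exact hne ▸ hy
  obtain ⟨k, hk⟩ := (hI.1 hy).2
  exact hI.2 y hy x ⟨hx, k, le_antisymm (hk ▸ hxy k) (hx k)⟩ (balancedLT_of_le x y hxy hne)

/-- `S(I)` is initial in the balanced order on positive points: if `z < y` with witness `p`, then
each `z` with one coordinate `k` zeroed lies weakly below `y` with a suitable coordinate zeroed.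
For `k ≠ p` zero the same coordinate; for `k = p` zero another coordinate where `z` and `y`
differ, if there is one. -/
theorem SSet_initial [DecidableEq κ] {I : Finset (κ → ℤ)} (hI : IsInitSeg I) (y z : κ → ℤ)
    (hy : y ∈ SSet I) (hz : ∀ k, 0 < z k) (hzy : balancedLT z y) : z ∈ SSet I := by
  refine ⟨hz, fun k => ?_⟩
  have hzX : Function.update z k 0 ∈ XSet κ := by
    refine ⟨fun j => ?_, k, by simp⟩
    by_cases h : j = k
    · simp [h]
    · simp [h, (hz j).le]
  obtain ⟨p, hp, h⟩ := (balancedLT_iff z y).1 hzy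
  have hyp := hy.1
  by_cases hkp : k = p
  · subst hkp
    by_cases hex : ∃ q, q ≠ k ∧ z q ≠ y q
    · obtain ⟨q, hqk, hq⟩ := hex
      refine hI.2 _ (hy.2 q) _ hzX ((balancedLT_iff _ _).2 ⟨k, ?_, fun j hj => ?_⟩)
      · simpa [hqk.symm] using (hyp k).ne
      · by_cases hjk : j = k
        · subst hjk
          simpa [hqk.symm] using hyp j
        · have hj' : z j ≠ y j := by
            by_cases hjq : j = q
            · rwa [hjq]
            · simpa [hjk, hjq] using hj
          simpa [hjk, hqk.symm] using h j hj'
    · push Not at hex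
      have : Function.update z k 0 = Function.update y k 0 := by
        funext j
        by_cases hjk : j = k
        · simp [hjk]
        · simp [hjk, hex j hjk]
      rw [this]
      exact hy.2 k
  · refine hI.2 _ (hy.2 k) _ hzX ((balancedLT_iff _ _).2 ⟨p, ?_, fun j hj => ?_⟩)
    · simpa [Ne.symm hkp] using hp
    · by_cases hjk : j = k
      · simp [hjk] at hj
      · simpa [hjk, Ne.symm hkp] using h j (by simpa [hjk] using hj)

end Order

/-! ### Counting in down-sets -/

theorem SSet_finite {κ : Type*} [Fintype κ] [DecidableEq κ] [Nontrivial κ] (I : Finset (κ → ℤ)) : (SSet I).Finite := by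
  refine (Fintype.piFinset fun j => I.image fun x => x j).finite_toSet.subset fun x hx => ?_
  simp only [Finset.mem_coe, Fintype.mem_piFinset, Finset.mem_image]
  intro j
  obtain ⟨k, hk⟩ := exists_ne j
  exact ⟨_, hx.2 k, by simp [hk.symm]⟩

/-- In a down-set each line in direction `j` that meets it has exactly one point with
`x j = 0`. -/
theorem card_proj_of_downSet {κ : Type*} [Fintype κ] [DecidableEq κ] {A : Finset (κ → ℤ)}
    (hA : IsDownSet A) (h0 : ∀ x ∈ A, ∀ k, 0 ≤ x k) (j : κ) :
    (proj j A).card = (A.filter fun x => x j = 0).card := by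
  have : proj j A = (A.filter fun x => x j = 0).image (projFun j) := by
    ext w
    simp only [proj, Finset.mem_image, Finset.mem_filter]
    constructor
    · rintro ⟨x, hx, rfl⟩
      refine ⟨Function.update x j 0, ⟨hA _ x ?_ ?_ hx, by simp⟩, ?_⟩
      · intro k
        by_cases hk : k = j
        · simp [hk]
        · simp [hk, h0 x hx k]
      · intro k
        by_cases hk : k = j
        · subst hk; simpa using h0 x hx k
        · simp [hk]
      · funext k
        simp [projFun, k.2]
    · rintro ⟨x, ⟨hx, -⟩, rfl⟩
      exact ⟨x, hx, rfl⟩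
  rw [this, Finset.card_image_of_injOn]
  intro x hx y hy hxy
  simp only [Finset.mem_coe, Finset.mem_filter] at hx hy
  funext k
  by_cases hk : k = j
  · rw [hk, hx.2, hy.2]
  · exact congrFun hxy ⟨k, hk⟩

/-! ### Slicing in the direction `i` -/

section Slices

variable {n : ℕ} {i : Fin n}

theorem insertAt_self (a : ℤ) (x : {j : Fin n // j ≠ i} → ℤ) : insertAt i a x i = a := by
  simp [insertAt]

theorem insertAt_ne (a : ℤ) (x : {j : Fin n // j ≠ i} → ℤ) (j : {j : Fin n // j ≠ i}) :
    insertAt i a x j = x j := by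
  simp [insertAt, j.2]

theorem insertAt_projFun (x : Fin n → ℤ) : insertAt i (x i) (projFun i x) = x := by
  funext j
  by_cases h : j = i
  · subst h; simp [insertAt]
  · simp [insertAt, projFun, h]

theorem projFun_insertAt (a : ℤ) (x : {j : Fin n // j ≠ i} → ℤ) :
    projFun i (insertAt i a x) = x := by
  funext j
  exact insertAt_ne a x j

theorem forall_insertAt {a : ℤ} {x : {j : Fin n // j ≠ i} → ℤ} {P : Fin n → ℤ → Prop} :
    (∀ j, P j (insertAt i a x j)) ↔ P i a ∧ ∀ j : {j : Fin n // j ≠ i}, P j (x j) := by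
  constructor
  · intro h
    exact ⟨by simpa [insertAt_self] using h i, fun j => by simpa [insertAt_ne] using h j⟩
  · rintro ⟨h1, h2⟩ j
    by_cases hj : j = i
    · subst hj; simpa [insertAt_self] using h1
    · have := h2 ⟨j, hj⟩
      rwa [← insertAt_ne a x ⟨j, hj⟩] at this

theorem update_insertAt_self (a b : ℤ) (x : {j : Fin n // j ≠ i} → ℤ) :
    Function.update (insertAt i a x) i b = insertAt i b x := by
  funext j
  by_cases h : j = i
  · subst h; simp [insertAt]
  · simp [insertAt, h]

theorem update_insertAt_ne (a b : ℤ) (x : {j : Fin n // j ≠ i} → ℤ) (k : {j : Fin n // j ≠ i}) :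
    Function.update (insertAt i a x) k b = insertAt i a (Function.update x k b) := by
  funext j
  by_cases h : j = i
  · subst h
    simp [insertAt, k.2.symm]
  · by_cases hk : j = k
    · subst hk
      simp [insertAt, h]
    · have : (⟨j, h⟩ : {j : Fin n // j ≠ i}) ≠ k := fun e => hk (congrArg Subtype.val e)
      simp [insertAt, h, hk, this]

theorem mem_proj_filter {a : ℤ} {A : Finset (Fin n → ℤ)} {x : {j : Fin n // j ≠ i} → ℤ} :
    x ∈ proj i (A.filter fun y => y i = a) ↔ insertAt i a x ∈ A := by
  simp only [proj, Finset.mem_image, Finset.mem_filter]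
  constructor
  · rintro ⟨y, ⟨hy, rfl⟩, rfl⟩
    rwa [insertAt_projFun]
  · intro h
    exact ⟨_, ⟨h, insertAt_self a x⟩, projFun_insertAt a x⟩

theorem mem_Lset {a : ℤ} {A : Finset (Fin n → ℤ)} {x : {j : Fin n // j ≠ i} → ℤ} :
    x ∈ Lset i a A ↔ insertAt i a x ∈ A ∧ ∃ j, x j = 0 := by
  rw [Lset, Finset.mem_filter, mem_proj_filter]

theorem mem_Kset {A : Finset (Fin n → ℤ)} {x : {j : Fin n // j ≠ i} → ℤ} :
    x ∈ Kset i A ↔ insertAt i 0 x ∈ A ∧ ∀ j, 0 < x j := by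
  rw [Kset, Finset.mem_filter, mem_proj_filter]

theorem balancedLT_insertAt (x y : {j : Fin n // j ≠ i} → ℤ) :
    balancedLT (insertAt i 0 x) (insertAt i 0 y) ↔ balancedLT x y := by
  rw [balancedLT_iff, balancedLT_iff]
  constructor
  · rintro ⟨p, hp, h⟩
    have hpi : p ≠ i := by
      rintro rfl
      simp [insertAt_self] at hp
    refine ⟨⟨p, hpi⟩, ?_, fun j hj => ?_⟩
    · simpa [insertAt, hpi] using hp
    · have := h j (by simpa [insertAt_ne] using hj)
      rw [insertAt_ne, show p = ((⟨p, hpi⟩ : {j : Fin n // j ≠ i}) : Fin n) from rfl,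
        insertAt_ne] at this
      exact this
  · rintro ⟨p, hp, h⟩
    refine ⟨p, by simpa [insertAt_ne] using hp, fun j hj => ?_⟩
    have hji : j ≠ i := by
      rintro rfl
      simp [insertAt_self] at hj
    have := h ⟨j, hji⟩ (by simpa [insertAt, hji] using hj)
    rw [insertAt_ne, show j = ((⟨j, hji⟩ : {j : Fin n // j ≠ i}) : Fin n) from rfl, insertAt_ne]
    exact this

theorem Lset_subset_XSet {A : Finset (Fin n → ℤ)} (hAX : ↑A ⊆ XSet (Fin n)) (a : ℤ) :
    ↑(Lset i a A) ⊆ XSet {j : Fin n // j ≠ i} := by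
  intro x hx
  obtain ⟨h1, h2⟩ := mem_Lset.1 hx
  exact ⟨((forall_insertAt (P := fun _ v => 0 ≤ v)).1 (hAX h1).1).2, h2⟩

theorem Lset_downSet {A : Finset (Fin n → ℤ)} (hA : IsDownSet A) {a : ℤ} (ha : 0 ≤ a) :
    IsDownSet (Lset i a A) := by
  intro x y hx hxy hy
  obtain ⟨h1, k, hk⟩ := mem_Lset.1 hy
  refine mem_Lset.2 ⟨hA _ _ (forall_insertAt (P := fun _ v => 0 ≤ v) |>.2 ⟨ha, hx⟩) ?_ h1, k,
    le_antisymm (hk ▸ hxy k) (hx k)⟩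
  rw [forall_insertAt (P := fun j v => v ≤ insertAt i a y j), insertAt_self]
  exact ⟨le_rfl, fun j => by rw [insertAt_ne]; exact hxy j⟩

theorem Lset_anti {A : Finset (Fin n → ℤ)} (hAX : ↑A ⊆ XSet (Fin n)) (hA : IsDownSet A) {a b : ℤ}
    (ha : 0 ≤ a) (hab : a ≤ b) : Lset i b A ⊆ Lset i a A := by
  intro x hx
  have hx0 := (Lset_subset_XSet hAX b hx).1
  obtain ⟨h1, h2⟩ := mem_Lset.1 hx
  refine mem_Lset.2 ⟨hA _ _ (forall_insertAt (P := fun _ v => 0 ≤ v) |>.2 ⟨ha, hx0⟩) ?_ h1, h2⟩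
  rw [forall_insertAt (P := fun j v => v ≤ insertAt i b x j), insertAt_self]
  exact ⟨hab, fun j => by rw [insertAt_ne]⟩

theorem Kset_subset_SSet {A : Finset (Fin n → ℤ)} (hA : IsDownSet A) :
    ↑(Kset i A) ⊆ SSet (Lset i 0 A) := by
  intro x hx
  obtain ⟨h1, h2⟩ := mem_Kset.1 hx
  refine ⟨h2, fun k => mem_Lset.2 ⟨hA _ _ ?_ ?_ h1, k, by simp⟩⟩
  · refine (forall_insertAt (P := fun _ v => 0 ≤ v)).2 ⟨le_rfl, fun j => ?_⟩
    by_cases h : j = k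
    · simp [h]
    · simp [h, (h2 j).le]
  · rw [forall_insertAt (P := fun j v => v ≤ insertAt i 0 x j), insertAt_self]
    refine ⟨le_rfl, fun j => ?_⟩
    rw [insertAt_ne]
    by_cases h : j = k
    · subst h; simpa using (h2 j).le
    · simp [h]

/-- `S(A)` slices, in direction `i`, into the sets `K ∩ S(L_a)` over `a > 0`. -/
theorem ncard_SSet_eq [Nontrivial (Fin n)] {A : Finset (Fin n → ℤ)} (R : Finset ℤ)
    (hR : ∀ a ∈ R, 0 < a) (hAR : ∀ x ∈ A, 0 < x i → x i ∈ R) :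
    (SSet A).ncard = ∑ a ∈ R, ((Kset i A : Set _) ∩ SSet (Lset i a A)).ncard := by
  classical
  have h : SSet A = (fun p : Σ _ : ℤ, ({j : Fin n // j ≠ i} → ℤ) => insertAt i p.1 p.2) ''
      (R.sigma fun a => (Kset i A).filter fun x => x ∈ SSet (Lset i a A) : Finset _) := by
    ext x
    simp only [Set.mem_image, Finset.mem_coe, Finset.mem_sigma, Finset.mem_filter]
    constructor
    · intro hx
      obtain ⟨k, hk⟩ := exists_ne i
      have hpos : ∀ j, 0 < projFun i x j := fun j => hx.1 j
      refine ⟨⟨x i, projFun i x⟩, ⟨?_, mem_Kset.2 ⟨?_, hpos⟩, hpos, fun j => mem_Lset.2 ⟨?_, j, ?_⟩⟩,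
        insertAt_projFun x⟩
      · have := hAR _ (hx.2 k) (by simpa [hk.symm] using hx.1 i)
        simpa [hk.symm] using this
      · rw [← update_insertAt_self (x i) 0, insertAt_projFun]
        exact hx.2 i
      · rw [← update_insertAt_ne, insertAt_projFun]
        exact hx.2 j
      · simp
    · rintro ⟨⟨a, w⟩, ⟨ha, hK, hw, hS⟩, rfl⟩
      refine ⟨(forall_insertAt (P := fun _ v => 0 < v)).2 ⟨hR a ha, hw⟩, fun k => ?_⟩
      by_cases hk : k = i
      · subst hk
        simp only [update_insertAt_self]
        exact (mem_Kset.1 hK).1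
      · have := update_insertAt_ne a 0 w ⟨k, hk⟩
        simp only at this ⊢
        rw [this]
        exact (mem_Lset.1 (hS ⟨k, hk⟩)).1
  rw [h, Set.ncard_image_of_injective, Set.ncard_coe_finset, Finset.card_sigma]
  · refine Finset.sum_congr rfl fun a _ => ?_
    rw [← Set.ncard_coe_finset, Finset.coe_filter]
    rfl
  · rintro ⟨a, v⟩ ⟨b, w⟩ hab
    simp only at hab
    have h1 : a = b := by simpa [insertAt_self] using congrFun hab i
    have h2 : v = w := by simpa [projFun_insertAt] using congrArg (projFun i) hab
    rw [h1, h2]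

theorem card_slice (A : Finset (Fin n → ℤ)) (a : ℤ) (Q : ({j : Fin n // j ≠ i} → ℤ) → Prop)
    [DecidablePred Q] :
    ((proj i (A.filter fun x => x i = a)).filter Q).card =
      (A.filter fun x => x i = a ∧ Q (projFun i x)).card := by
  rw [proj, Finset.filter_image, Finset.filter_filter, Finset.card_image_of_injOn]
  intro x hx y hy hxy
  simp only [Finset.mem_coe, Finset.mem_filter] at hx hy
  rw [← insertAt_projFun (i := i) x, ← insertAt_projFun (i := i) y, hx.2.1, hy.2.1, hxy]

/-- For a down-set, `|π_j A|` counts the points with `x j = 0`, so every term of the gap slices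
in direction `i`. The contribution of `K` to `|π_i A|` cancels its contribution to `|A|`. -/
theorem gap_eq {A : Finset (Fin n → ℤ)} (hAX : ↑A ⊆ XSet (Fin n)) (hA : IsDownSet A)
    (R : Finset ℤ) (hR : ∀ a ∈ R, 0 ≤ a) (hAR : ∀ x ∈ A, x i ∈ R) :
    gap A = (Lset i 0 A).card + ∑ a ∈ R, gap (Lset i a A) := by
  classical
  have h0 : ∀ x ∈ A, ∀ k, 0 ≤ x k := fun x hx => (hAX hx).1
  have hnot : ∀ x ∈ A, (¬ ∃ j, projFun i x j = 0) ↔ (∀ j, 0 < projFun i x j) := by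
    intro x hx
    push Not
    exact forall_congr' fun j => ⟨fun h => lt_of_le_of_ne (h0 x hx j) (Ne.symm h), fun h => h.ne'⟩
  have hK : (Kset i A).card = (A.filter fun x => x i = 0 ∧ ¬ ∃ j, projFun i x j = 0).card := by
    rw [Kset, card_slice]
    exact congrArg _ (Finset.filter_congr fun x hx => by rw [hnot x hx])
  have hi : (proj i A).card = (Lset i 0 A).card + (Kset i A).card := by
    rw [card_proj_of_downSet hA h0, hK, Lset, card_slice,
      ← Finset.card_filter_add_card_filter_not (s := A.filter fun x => x i = 0)
        (fun x => ∃ j, projFun i x j = 0), Finset.filter_filter, Finset.filter_filter]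
  have hcard : A.card = ∑ a ∈ R, (Lset i a A).card + (Kset i A).card := by
    rw [← Finset.card_filter_add_card_filter_not (s := A) (fun x => ∃ j, projFun i x j = 0)]
    congr 1
    · rw [Finset.card_eq_sum_card_fiberwise (f := fun x => x i) (t := R)]
      · refine Finset.sum_congr rfl fun a _ => ?_
        rw [Lset, card_slice, Finset.filter_filter]
        simp only [and_comm]
      · intro x hx
        exact hAR x (Finset.mem_filter.1 hx).1
    · rw [hK]
      refine congrArg _ (Finset.filter_congr fun x hx => ⟨fun h => ⟨?_, h⟩, fun h => h.2⟩)
      obtain ⟨k, hk⟩ := (hAX hx).2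
      by_contra hne
      exact h ⟨⟨k, fun e => hne (e ▸ hk)⟩, hk⟩
  have hj : ∀ j : {j : Fin n // j ≠ i},
      (proj (j : Fin n) A).card = ∑ a ∈ R, (proj j (Lset i a A)).card := by
    intro j
    rw [card_proj_of_downSet hA h0,
      Finset.card_eq_sum_card_fiberwise (f := fun x => x i) (t := R)]
    · refine Finset.sum_congr rfl fun a ha => ?_
      rw [card_proj_of_downSet (Lset_downSet hA (hR a ha))
        (fun x hx => (Lset_subset_XSet hAX a hx).1), Lset, Finset.filter_filter,
        Finset.filter_filter, card_slice]
      refine congrArg _ (Finset.filter_congr fun x _ => ?_)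
      exact ⟨fun h => ⟨h.2, ⟨j, h.1⟩, h.1⟩, fun h => ⟨h.2.2, h.1⟩⟩
    · intro x hx
      exact hAR x (Finset.mem_filter.1 hx).1
  have hsum : (∑ k : Fin n, ((proj k A).card : ℤ)) =
      (proj i A).card + ∑ j : {j : Fin n // j ≠ i}, ((proj (j : Fin n) A).card : ℤ) := by
    rw [← Finset.add_sum_erase _ _ (Finset.mem_univ i)]
    congr 1
    refine Finset.sum_subtype _ (fun k => ?_) _
    simp
  have hsum2 : (∑ j : {j : Fin n // j ≠ i}, ((proj (j : Fin n) A).card : ℤ)) =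
      ∑ a ∈ R, ∑ j : {j : Fin n // j ≠ i}, ((proj j (Lset i a A)).card : ℤ) := by
    rw [Finset.sum_comm]
    exact Finset.sum_congr rfl fun j _ => by rw [hj j]; push_cast; rfl
  simp only [gap]
  rw [hsum, hsum2, hi, hcard, Finset.sum_sub_distrib]
  push_cast
  ring

end Slices

/-! ### The compression theorem -/

/-- Let `n ≥ 3` and suppose initial segments of the balanced order maximise
`|S(·)|` among down-sets in `X_{n-1}` of given size. If `A ⊆ X_n` is a finite down-set and
`A'` is its balanced-`i`-compression (characterised by: `A' ⊆ X_n`, each `L^i_a(A')` is an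
initial segment of the balanced order of size `|L^i_a(A)|`, and `K^i(A')` is an initial
segment of `ℤ_{>0}^{n-1}` for `≺` of size `|K^i(A)|`), then (i) `A'` is a down-set;
(ii) `|S(A')| ≥ |S(A)|`; (iii) if moreover initial segments minimise the gap among subsets
of `X_{n-1}` of given size, then `gap A' ≤ gap A`. -/
theorem balanced_compression_properties (n : ℕ) (hn : 3 ≤ n) (i : Fin n)
    (hmax : ∀ B I : Finset ({j : Fin n // j ≠ i} → ℤ),
      ↑B ⊆ XSet {j : Fin n // j ≠ i} → IsDownSet B → IsInitSeg I → I.card = B.card →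
        (SSet B).ncard ≤ (SSet I).ncard)
    (A : Finset (Fin n → ℤ)) (hAX : ↑A ⊆ XSet (Fin n)) (hAdown : IsDownSet A)
    (A' : Finset (Fin n → ℤ)) (hA'X : ↑A' ⊆ XSet (Fin n))
    (hL : ∀ a : ℤ, 0 ≤ a → IsInitSeg (Lset i a A') ∧ (Lset i a A').card = (Lset i a A).card)
    (hKinit : IsKInitSeg i (Kset i A')) (hKcard : (Kset i A').card = (Kset i A).card) :
    IsDownSet A' ∧ (SSet A).ncard ≤ (SSet A').ncard ∧
      ((∀ B I : Finset ({j : Fin n // j ≠ i} → ℤ),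
          ↑B ⊆ XSet {j : Fin n // j ≠ i} → IsInitSeg I → I.card = B.card → gap I ≤ gap B) →
        gap A' ≤ gap A) := by
  classical
  have hnt : Nontrivial (Fin n) := Fin.nontrivial_iff_two_le.2 (by omega)
  have hntJ : Nontrivial {j : Fin n // j ≠ i} := by
    refine Fintype.one_lt_card_iff_nontrivial.1 ?_
    rw [Fintype.card_subtype_compl, Fintype.card_fin, Fintype.card_subtype_eq]
    omega
  have hA'0 : ∀ x ∈ A', ∀ k, 0 ≤ x k := fun x hx => (hA'X hx).1
  have hS : ∀ a, 0 ≤ a → (SSet (Lset i a A)).ncard ≤ (SSet (Lset i a A')).ncard := fun a ha =>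
    hmax _ _ (Lset_subset_XSet hAX a) (Lset_downSet hAdown ha) (hL a ha).1 (hL a ha).2
  -- `K'` and `S(L'_a)` are both initial segments of the balanced order on positive points.
  have hnest : ∀ a, 0 ≤ a → (Kset i A' : Set _) ⊆ SSet (Lset i a A') ∨
      SSet (Lset i a A') ⊆ (Kset i A' : Set _) := fun a ha =>
    initial_nested {x | ∀ j, 0 < x j} _ _ (fun x hx => hKinit.1 x hx) (fun x hx => hx.1)
      (fun x hx y hy hyx => hKinit.2 x hx y hy ((balancedLT_insertAt y x).2 hyx))
      (fun x hx y hy hyx => SSet_initial (hL a ha).1 x y hx hy hyx)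
  -- Here the hypothesis on `|S|` bounds `|K|`: `K ⊆ S(L₀)` since `A` is a down-set.
  have hKS : (Kset i A' : Set _) ⊆ SSet (Lset i 0 A') := by
    rcases hnest 0 le_rfl with h | h
    · exact h
    · refine (Set.eq_of_subset_of_ncard_le h ?_).symm.subset
      rw [Set.ncard_coe_finset, hKcard, ← Set.ncard_coe_finset]
      exact (Set.ncard_le_ncard (Kset_subset_SSet hAdown) (SSet_finite _)).trans (hS 0 le_rfl)
  have hanti : ∀ a b, 0 ≤ a → a ≤ b → Lset i b A' ⊆ Lset i a A' := fun a b ha hab =>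
    initSeg_subset (hL b (ha.trans hab)).1 (hL a ha).1 (by
      rw [(hL b (ha.trans hab)).2, (hL a ha).2]
      exact Finset.card_le_card (Lset_anti hAX hAdown ha hab))
  have hdown : IsDownSet A' := by
    intro x y hx hxy hy
    rw [← insertAt_projFun (i := i) x]
    have hpx : ∀ j, 0 ≤ projFun i x j := fun j => hx j
    have hpxy : ∀ j, projFun i x j ≤ projFun i y j := fun j => hxy j
    by_cases hyz : ∃ j, projFun i y j = 0
    · have hyL : projFun i y ∈ Lset i (y i) A' := mem_Lset.2 ⟨by rwa [insertAt_projFun], hyz⟩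
      exact (mem_Lset.1 (initSeg_downSet (hL (x i) (hx i)).1 _ _ hpx hpxy
        (hanti _ _ (hx i) (hxy i) hyL))).1
    · push Not at hyz
      have hypos : ∀ j, 0 < projFun i y j := fun j =>
        lt_of_le_of_ne (hA'0 y hy j) (Ne.symm (hyz j))
      have hyi : y i = 0 := by
        obtain ⟨k, hk⟩ := (hA'X hy).2
        by_contra hne
        exact hyz ⟨k, fun e => hne (e ▸ hk)⟩ hk
      have hxi : x i = 0 := le_antisymm (hyi ▸ hxy i) (hx i)
      have hyK : projFun i y ∈ Kset i A' :=
        mem_Kset.2 ⟨by rw [← hyi, insertAt_projFun]; exact hy, hypos⟩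
      rw [hxi]
      by_cases hxz : ∃ j, projFun i x j = 0
      · obtain ⟨k, hk⟩ := hxz
        refine (mem_Lset.1 (initSeg_downSet (hL 0 le_rfl).1 _ _ hpx (fun j => ?_)
          ((hKS hyK).2 k))).1
        by_cases hjk : j = k
        · subst hjk; simp [hk]
        · simpa [hjk] using hpxy j
      · push Not at hxz
        have hxpos : ∀ j, 0 < projFun i x j := fun j => lt_of_le_of_ne (hx j) (Ne.symm (hxz j))
        by_cases hne : projFun i x = projFun i y
        · rw [hne]; exact (mem_Kset.1 hyK).1
        · exact (mem_Kset.1 (hKinit.2 _ hyK _ hxpos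
            ((balancedLT_insertAt _ _).2 (balancedLT_of_le _ _ hpxy hne)))).1
  refine ⟨hdown, ?_, fun hgap => ?_⟩
  · set R := ((A ∪ A').image fun x => x i).filter fun a => 0 < a with hRdef
    have hR : ∀ a ∈ R, 0 < a := fun a ha => (Finset.mem_filter.1 ha).2
    have hmem : ∀ x ∈ A ∪ A', 0 < x i → x i ∈ R := fun x hx hp =>
      Finset.mem_filter.2 ⟨Finset.mem_image_of_mem _ hx, hp⟩
    rw [ncard_SSet_eq (i := i) R hR fun x hx => hmem x (Finset.mem_union_left _ hx),
      ncard_SSet_eq (i := i) R hR fun x hx => hmem x (Finset.mem_union_right _ hx)]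
    refine Finset.sum_le_sum fun a ha => ?_
    have ha0 := (hR a ha).le
    -- `|K ∩ S(L_a)| ≤ min (|K|, |S(L_a)|)`, and for `A'` the corresponding minimum is attained.
    rcases hnest a ha0 with h | h
    · rw [Set.inter_eq_left.2 h, Set.ncard_coe_finset, hKcard, ← Set.ncard_coe_finset]
      exact Set.ncard_le_ncard Set.inter_subset_left (Finset.finite_toSet _)
    · rw [Set.inter_eq_right.2 h]
      exact (Set.ncard_le_ncard Set.inter_subset_right (SSet_finite _)).trans (hS a ha0)
  · set R := (A ∪ A').image fun x => x i with hRdef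
    have hR : ∀ a ∈ R, 0 ≤ a := by
      intro a ha
      obtain ⟨x, hx, rfl⟩ := Finset.mem_image.1 ha
      rcases Finset.mem_union.1 hx with h | h
      · exact (hAX h).1 i
      · exact hA'0 x h i
    have hmem : ∀ x ∈ A ∪ A', x i ∈ R := fun x hx => Finset.mem_image_of_mem _ hx
    rw [gap_eq hAX hAdown R hR fun x hx => hmem x (Finset.mem_union_left _ hx),
      gap_eq hA'X hdown R hR fun x hx => hmem x (Finset.mem_union_right _ hx), (hL 0 le_rfl).2]
    gcongr with a ha
    exact hgap _ _ (Lset_subset_XSet hAX a) (hL a (hR a ha)).1 (hL a (hR a ha)).2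

end ProjWA
end

section
/- For every n ≥ 2, initial segments of the balanced order maximise |S(·)| among down-sets in X_n of given size: if A ⊆ X_n is a finite down-set and I is the initial segment of the balanced order on X_n with |I| = |A|, then |S(I)| ≥ |S(A)|. -/
/-!
Comparing two points of `ℕ^n` in the balanced order amounts to comparing the binary numbers
`∑ i, 2 ^ (n * x i + i)`: the largest exponent among the coordinates where the points differ decides.
Working with this `key` makes the order additive, so it is inherited when a coordinate is deleted,
provided the tie-breaking labels `i` are allowed to be arbitrary distinct numbers below a fixed `N`.

The extremal statement `card_SFin_le` is proved by induction on `n`, and for fixed `n` by induction on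
the total key of the down-set `A`. An initial segment of the right size is the unique minimiser of
the total key, so it suffices to lower the total key of any other down-set without losing size or
decreasing `|S(A)|`. There are two ways to do so.

* Compression (`exists_compress`). Split `A` by the value of coordinate `i` into slices in `X_{n-1}`
  and the core, the points whose only zero is at `i`. Then `|S(A)|` is the sum over `a ≥ 1` of
  `|S(L_a) ∩ K|`, with `L_a` the slices and `K` the core. Replace each slice and the core by initial
  segments of the same sizes. By the induction hypothesis `|S(L_a)|` does not decrease, and `S` of an
  initial segment is an initial segment (`IsInit.SFin`), so the intersections become intersections
  of nested sets and do not shrink.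
* Exchange (`exists_swap`). If `A` is unchanged by all compressions but is not an initial segment, let
  `x` be the smallest missing point and `y` the largest point of `A`, and let `p` be the coordinate
  that decides `x < y`. Stability forces `x` to have a unique zero. If removing `y` destroys any
  points of `S(A)`, then `y` has a unique zero `k ≠ p`, the zero of `x` is at `p`, and the points
  destroyed are among the `y + c e_k` with `1 ≤ c < y p`. On the other hand all `x + c e_p` with
  `1 ≤ c < y p` are created by adding `x`, so the exchange of `y` for `x` does not decrease `|S(A)|`.

In dimension two compressions do nothing, and the exchange step alone suffices (`stable_two`).
-/

namespace ProjWA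

variable {ι : Type*}

/-! ### The balanced order as a numerical key -/

/-- The exponent `N * x i + σ i` carried by coordinate `i` of `x`. When `σ` takes values below `N`,
comparing exponents compares the values first and the tie-breaking labels `σ` second. -/
def expo {n : ℕ} (N : ℕ) (σ : Fin n → ℕ) (x : Fin n → ℕ) (i : Fin n) : ℕ := N * x i + σ i

/-- The key of a point of `ℕ^n`. Comparing keys is comparing in the balanced order, with ties between
coordinates broken by the labels `σ` (the original order is `σ i = i`). Arbitrary labels are allowed
so that the order is inherited when a coordinate is deleted. -/
def key {n : ℕ} (N : ℕ) (σ : Fin n → ℕ) (x : Fin n → ℕ) : ℕ := ∑ i, 2 ^ expo N σ x i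

/-- Admissible tie-breaking labels: distinct and smaller than `N`. -/
def Labels {n : ℕ} (N : ℕ) (σ : Fin n → ℕ) : Prop := Function.Injective σ ∧ ∀ i, σ i < N

section Key

variable {n N : ℕ} {σ : Fin n → ℕ}

lemma expo_lt_iff (h : Labels N σ) {x y : Fin n → ℕ} {i j : Fin n} :
    expo N σ x i < expo N σ y j ↔ x i < y j ∨ (x i = y j ∧ σ i < σ j) := by
  unfold expo
  have hi := h.2 i
  have hj := h.2 j
  rcases lt_trichotomy (x i) (y j) with hlt | heq | hgt
  · have : N * (x i + 1) ≤ N * y j := Nat.mul_le_mul_left _ hlt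
    constructor
    · intro _; exact Or.inl hlt
    · intro _; rw [Nat.mul_add] at this; omega
  · rw [heq]; constructor
    · intro _; right; exact ⟨rfl, by omega⟩
    · rintro (h1 | h1)
      · omega
      · omega
  · have : N * (y j + 1) ≤ N * x i := Nat.mul_le_mul_left _ hgt
    rw [Nat.mul_add] at this
    constructor
    · intro _; omega
    · intro _; omega

lemma expo_inj (h : Labels N σ) {x y : Fin n → ℕ} {i j : Fin n}
    (he : expo N σ x i = expo N σ y j) : i = j ∧ x i = y j := by
  have h1 := (expo_lt_iff h (x := x) (y := y) (i := i) (j := j)).not.1 (by omega)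
  have h2 := (expo_lt_iff h (x := y) (y := x) (i := j) (j := i)).not.1 (by omega)
  refine ⟨h.1 ?_, ?_⟩ <;> omega

lemma key_mono {x y : Fin n → ℕ} (hxy : x ≤ y) : key N σ x ≤ key N σ y := by
  refine Finset.sum_le_sum fun i _ => Nat.pow_le_pow_right (by norm_num) ?_
  exact Nat.add_le_add_right (Nat.mul_le_mul_left _ (hxy i)) _

/-- The number with binary digit `1` in a position `p` exceeds any number whose positions, on the
coordinates where the two points differ, all lie below `p`. -/
lemma key_lt_of (h : Labels N σ) {x y : Fin n → ℕ} (p : Fin n) (hp : x p < y p)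
    (hT : ∀ i, x i ≠ y i → expo N σ x i < expo N σ y p) : key N σ x < key N σ y := by
  classical
  unfold key
  rw [← Finset.sum_filter_add_sum_filter_not Finset.univ (fun i => x i ≠ y i)
      (fun i => 2 ^ expo N σ x i),
    ← Finset.sum_filter_add_sum_filter_not Finset.univ (fun i => x i ≠ y i)
      (fun i => 2 ^ expo N σ y i)]
  have e2 : ∑ i ∈ Finset.univ.filter (fun i => ¬ x i ≠ y i), 2 ^ expo N σ x i
      = ∑ i ∈ Finset.univ.filter (fun i => ¬ x i ≠ y i), 2 ^ expo N σ y i := by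
    refine Finset.sum_congr rfl fun i hi => ?_
    have : x i = y i := by simpa using hi
    simp [expo, this]
  rw [e2]
  refine Nat.add_lt_add_right ?_ _
  calc ∑ i ∈ Finset.univ.filter (fun i => x i ≠ y i), 2 ^ expo N σ x i
      = ∑ k ∈ (Finset.univ.filter (fun i => x i ≠ y i)).image (expo N σ x), 2 ^ k := by
        rw [Finset.sum_image]
        intro i _ j _ hij
        exact (expo_inj h hij).1
    _ < 2 ^ expo N σ y p := by
        refine Nat.geomSum_lt le_rfl ?_
        intro k hk
        obtain ⟨i, hi, rfl⟩ := Finset.mem_image.1 hk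
        exact hT i (by simpa using hi)
    _ ≤ _ := Finset.single_le_sum (f := fun i => 2 ^ expo N σ y i) (fun _ _ => Nat.zero_le _)
        (by simp [hp.ne])

/-- Distinct points are comparable, and the larger one owns the top exponent over the coordinates
where they differ. -/
lemma exists_top (h : Labels N σ) {x y : Fin n → ℕ} (hne : x ≠ y) :
    (∃ p, x p < y p ∧ ∀ i, x i ≠ y i →
        expo N σ x i < expo N σ y p ∧ expo N σ y i ≤ expo N σ y p) ∨
    (∃ p, y p < x p ∧ ∀ i, x i ≠ y i →
        expo N σ y i < expo N σ x p ∧ expo N σ x i ≤ expo N σ x p) := by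
  classical
  have hT : (Finset.univ.filter (fun i => x i ≠ y i)).Nonempty := by
    obtain ⟨i, hi⟩ := Function.ne_iff.1 hne
    exact ⟨i, by simpa using hi⟩
  obtain ⟨p, hp, hpm⟩ := Finset.exists_max_image _ (expo N σ y) hT
  obtain ⟨q, hq, hqm⟩ := Finset.exists_max_image _ (expo N σ x) hT
  have hp' : x p ≠ y p := by simpa using hp
  have hq' : x q ≠ y q := by simpa using hq
  rcases lt_trichotomy (expo N σ x q) (expo N σ y p) with hlt | heq | hgt
  · left
    refine ⟨p, ?_, fun i hi => ⟨?_, hpm i (by simpa using hi)⟩⟩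
    · have := (expo_lt_iff h).1 (lt_of_le_of_lt (hqm p hp) hlt)
      omega
    · exact lt_of_le_of_lt (hqm i (by simpa using hi)) hlt
  · obtain ⟨h1, h2⟩ := expo_inj h heq
    subst h1; exact absurd h2 hp'
  · right
    refine ⟨q, ?_, fun i hi => ⟨?_, hqm i (by simpa using hi)⟩⟩
    · have := (expo_lt_iff h).1 (lt_of_le_of_lt (hpm q hq) hgt)
      omega
    · exact lt_of_le_of_lt (hpm i (by simpa using hi)) hgt

lemma exists_top_of_key_lt (h : Labels N σ) {x y : Fin n → ℕ} (hlt : key N σ x < key N σ y) :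
    ∃ p, x p < y p ∧ ∀ i, x i ≠ y i →
        expo N σ x i < expo N σ y p ∧ expo N σ y i ≤ expo N σ y p := by
  have hne : x ≠ y := by rintro rfl; omega
  rcases exists_top h hne with h1 | ⟨p, hp, hT⟩
  · exact h1
  · have := key_lt_of h p hp fun i hi => (hT i hi.symm).1
    omega

lemma key_injective (h : Labels N σ) : Function.Injective (key N σ) := by
  intro x y hxy
  by_contra hne
  rcases exists_top h hne with ⟨p, hp, hT⟩ | ⟨p, hp, hT⟩
  · have := key_lt_of h p hp fun i hi => (hT i hi).1
    omega
  · have := key_lt_of h p hp fun i hi => (hT i hi.symm).1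
    omega

end Key

/-- Deleting the coordinate `i` subtracts a term depending only on the deleted entry. -/
lemma key_insertNth {n N : ℕ} {σ : Fin (n + 1) → ℕ} (i : Fin (n + 1)) (a : ℕ) (x : Fin n → ℕ) :
    key N σ (i.insertNth (α := fun _ => ℕ) a x)
      = 2 ^ (N * a + σ i) + key N (σ ∘ i.succAbove) x := by
  simp [key, expo, Fin.sum_univ_succAbove _ i]

lemma Labels.comp_succAbove {n N : ℕ} {σ : Fin (n + 1) → ℕ} (h : Labels N σ) (i : Fin (n + 1)) :
    Labels N (σ ∘ i.succAbove) :=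
  ⟨h.1.comp Fin.succAbove_right_injective, fun _ => h.2 _⟩

/-! ### Initial segments with respect to an injective key -/

/-- `J` is an initial segment of `Y` for the order given by the key `f`. -/
def IsInit {α : Type*} (f : α → ℕ) (Y : Set α) (J : Finset α) : Prop :=
  ↑J ⊆ Y ∧ ∀ x ∈ J, ∀ y ∈ Y, f y < f x → y ∈ J

section Init

variable {α : Type*} {f : α → ℕ} {Y : Set α}

lemma IsInit.subset_of_card_le (hf : Function.Injective f) {J J' : Finset α}
    (hJ : IsInit f Y J) (hJ' : IsInit f Y J') (hc : J.card ≤ J'.card) : J ⊆ J' := by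
  classical
  by_contra hns
  obtain ⟨x, hx, hx'⟩ := Finset.not_subset.1 hns
  have hsub : J' ⊆ J := by
    intro y hy
    rcases lt_trichotomy (f y) (f x) with h | h | h
    · exact hJ.2 x hx y (hJ'.1 hy) h
    · exact (hf h) ▸ hx
    · exact absurd (hJ'.2 y hy x (hJ.1 hx) h) hx'
  have : J' = J := Finset.eq_of_subset_of_card_le hsub hc
  exact hx' (this ▸ hx)

lemma exists_init (hY : Y.Infinite) (m : ℕ) :
    ∃ J : Finset α, IsInit f Y J ∧ J.card = m := by
  classical
  induction m with
  | zero => exact ⟨∅, ⟨by simp, by simp⟩, rfl⟩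
  | succ m ih =>
    obtain ⟨J, hJ, hc⟩ := ih
    have hne : (Y \ ↑J).Nonempty := (hY.sdiff J.finite_toSet).nonempty
    obtain ⟨z, ⟨hzY, hzJ⟩, hmin⟩ := exists_minimalFor_of_wellFoundedLT (· ∈ Y \ ↑J) f hne
    refine ⟨insert z J, ⟨?_, ?_⟩, ?_⟩
    · intro w hw
      rcases Finset.mem_insert.1 (Finset.mem_coe.1 hw) with rfl | hw
      · exact hzY
      · exact hJ.1 hw
    · intro x hx y hy hlt
      by_cases hyJ : y ∈ J
      · exact Finset.mem_insert_of_mem hyJ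
      rcases Finset.mem_insert.1 hx with rfl | hx
      · exact absurd (hmin ⟨hy, hyJ⟩ hlt.le) (by omega)
      · exact Finset.mem_insert_of_mem (hJ.2 x hx y hy hlt)
    · rw [Finset.card_insert_of_notMem (by simpa using hzJ), hc]

/-- Among the sets of a given size, the initial segment is the unique one of smallest total key. -/
lemma IsInit.sum_lt (hf : Function.Injective f) {J A : Finset α}
    (hJ : IsInit f Y J) (hA : ↑A ⊆ Y) (hc : J.card = A.card) (hne : J ≠ A) :
    ∑ x ∈ J, f x < ∑ x ∈ A, f x := by
  classical
  have hcs : (J \ A).card = (A \ J).card := Finset.card_sdiff_comm hc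
  have hJA : (J \ A).Nonempty := by
    rw [Finset.sdiff_nonempty]
    intro hs; exact hne (Finset.eq_of_subset_of_card_le hs hc.ge)
  obtain ⟨t, ht, htm⟩ := Finset.exists_max_image _ f hJA
  have h1 : ∑ x ∈ J \ A, f x ≤ (J \ A).card • f t := Finset.sum_le_card_nsmul _ _ _ htm
  have h2 : (A \ J).card • (f t + 1) ≤ ∑ x ∈ A \ J, f x := by
    refine Finset.card_nsmul_le_sum _ _ _ fun y hy => ?_
    rw [Finset.mem_sdiff] at hy ht
    by_contra hlt
    have : f y ≠ f t := fun h => hy.2 (hf h ▸ ht.1)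
    exact hy.2 (hJ.2 t ht.1 y (hA hy.1) (by omega))
  have h3 : 0 < (J \ A).card := hJA.card_pos
  rw [← Finset.sum_inter_add_sum_sdiff J A, ← Finset.sum_inter_add_sum_sdiff A J,
    Finset.inter_comm A J]
  rw [← hcs] at h2
  simp only [smul_eq_mul, mul_add, mul_one] at h1 h2
  omega

lemma IsInit.sum_le (hf : Function.Injective f) {J A : Finset α}
    (hJ : IsInit f Y J) (hA : ↑A ⊆ Y) (hc : J.card = A.card) :
    ∑ x ∈ J, f x ≤ ∑ x ∈ A, f x := by
  by_cases h : J = A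
  · rw [h]
  · exact (hJ.sum_lt hf hA hc h).le

end Init

/-! ### Stable down-sets -/

/-- The points of `ℕ^n` with some zero coordinate. -/
def XNat (n : ℕ) : Set (Fin n → ℕ) := {x | ∃ i, x i = 0}

/-- The points of `ℕ^n` with all coordinates positive. -/
def PosNat (n : ℕ) : Set (Fin n → ℕ) := {x | ∀ i, 0 < x i}

/-- A down-set in `ℕ^n`. -/
def DownNat {n : ℕ} (A : Finset (Fin n → ℕ)) : Prop := ∀ x y, x ≤ y → y ∈ A → x ∈ A

/-- `S(A)` as a finite set. For `n ≥ 2` every coordinate of a member of `S(A)` is a coordinate of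
a member of `A`, so that the ambient box loses nothing. -/
noncomputable def SFin {n : ℕ} (A : Finset (Fin n → ℕ)) : Finset (Fin n → ℕ) :=
  (Fintype.piFinset fun j => A.image fun x => x j).filter
    fun x => (∀ k, 0 < x k) ∧ ∀ k, Function.update x k 0 ∈ A

lemma mem_SFin {n : ℕ} (hn : 2 ≤ n) {A : Finset (Fin n → ℕ)} {x : Fin n → ℕ} :
    x ∈ SFin A ↔ (∀ k, 0 < x k) ∧ ∀ k, Function.update x k 0 ∈ A := by
  unfold SFin
  rw [Finset.mem_filter]
  refine ⟨fun h => h.2, fun h => ⟨?_, h⟩⟩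
  rw [Fintype.mem_piFinset]
  intro j
  have : Nontrivial (Fin n) := Fin.nontrivial_iff_two_le.2 hn
  obtain ⟨k, hk⟩ := exists_ne j
  exact Finset.mem_image.2 ⟨_, h.2 k, by simp [hk.symm]⟩

/-- A set is stable if it is closed under passing to smaller points of `X_n` having an equal entry in some
coordinate `i`, provided that either both points or neither have a zero outside `i`. This is what
invariance under all compressions amounts to. -/
def Stable {n : ℕ} (N : ℕ) (σ : Fin n → ℕ) (A : Finset (Fin n → ℕ)) : Prop :=
  ∀ i x y, x ∈ XNat n → y ∈ A → x i = y i → ((∃ j, j ≠ i ∧ x j = 0) ↔ (∃ j, j ≠ i ∧ y j = 0)) →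
    key N σ x < key N σ y → x ∈ A

section Swap

variable {n N : ℕ} {σ : Fin n → ℕ} {A : Finset (Fin n → ℕ)}

lemma Stable.of_pos (hs : Stable N σ A) (hAX : ↑A ⊆ XNat n) {i : Fin n} {x y : Fin n → ℕ}
    (hx : x ∈ XNat n) (hy : y ∈ A) (hxy : x i = y i) (hpos : x i ≠ 0)
    (hlt : key N σ x < key N σ y) : x ∈ A := by
  refine hs i x y hx hy hxy ?_ hlt
  obtain ⟨j, hj⟩ := hx
  obtain ⟨k, hk⟩ := hAX hy
  refine iff_of_true ⟨j, ?_, hj⟩ ⟨k, ?_, hk⟩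
  · rintro rfl; exact hpos hj
  · rintro rfl; exact hpos (hxy.trans hk)

/-- The exchange step. If `x` is a point of `X_n` missing from a stable down-set `A` and `y > x` lies in
`A`, then replacing `y` by `x` does not decrease `|S(A)|`. -/
lemma swap_card_le (hn : 2 ≤ n) (hσ : Labels N σ) (hAX : ↑A ⊆ XNat n) (hA : DownNat A)
    (hs : Stable N σ A) {x y : Fin n → ℕ} (hx : x ∈ XNat n) (hxA : x ∉ A)
    (hy : y ∈ A) (hlt : key N σ x < key N σ y) :
    (SFin A).card ≤ (SFin (insert x (A.erase y))).card := by
  classical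
  obtain ⟨p, hp, hT⟩ := exists_top_of_key_lt hσ hlt
  -- the top exponent of `y` beats all exponents of `x`, not only those where `x` and `y` differ
  have hF : ∀ i, expo N σ x i < expo N σ y p := by
    intro i
    by_cases hi : x i = y i
    · by_cases h0 : x i = 0
      · exact (expo_lt_iff hσ).2 (Or.inl (by omega))
      · exact absurd (hs.of_pos hAX hx hy hi h0 hlt) hxA
    · exact (hT i hi).1
  have hle : ∀ i, x i ≤ y p := by
    intro i
    have := (expo_lt_iff hσ).1 (hF i)
    omega
  have hbeat : ∀ u : Fin n → ℕ, u p = y p → key N σ x < key N σ u := by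
    intro u hu
    have hup : expo N σ u p = expo N σ y p := by simp [expo, hu]
    exact key_lt_of hσ p (by omega) fun i _ => by rw [hup]; exact hF i
  obtain ⟨r, hr⟩ := hx
  have huniq : ∀ j, j ≠ r → 0 < x j := by
    -- if `x` had a second zero it would be comparable with `y p • e_p ∈ A`
    have key2 : ∀ s t : Fin n, s ≠ p → t ≠ s → x s = 0 → x t = 0 → False := by
      intro s t hsp hts hxs hxt
      have hm : Function.update (0 : Fin n → ℕ) p (y p) ∈ A := by
        refine hA _ y ?_ hy
        rw [update_le_iff]
        exact ⟨le_rfl, fun j _ => Nat.zero_le _⟩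
      by_cases hj : ∃ j, j ≠ s ∧ j ≠ p
      · obtain ⟨j, hjs, hjp⟩ := hj
        refine hxA (hs s x _ ⟨r, hr⟩ hm ?_ ?_ (hbeat _ (by simp)))
        · simp [hsp, hxs]
        · exact iff_of_true ⟨t, hts, hxt⟩ ⟨j, hjs, by simp [hjp]⟩
      · push Not at hj
        have htp : t = p := hj t hts
        refine hxA (hA x y (fun j => ?_) hy)
        by_cases hjs : j = s
        · rw [hjs, hxs]; exact Nat.zero_le _
        · rw [hj j hjs, ← htp, hxt]; exact Nat.zero_le _
    intro j hj
    by_contra h0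
    have h0 : x j = 0 := by omega
    by_cases hrp : r = p
    · exact key2 j r (by rw [← hrp]; exact hj) hj.symm h0 hr
    · exact key2 r j hrp hj hr h0
  set A' := insert x (A.erase y) with hA'
  rw [← Finset.card_sdiff_add_card_inter (SFin A) (SFin A'),
    ← Finset.card_sdiff_add_card_inter (SFin A') (SFin A), Finset.inter_comm (SFin A') (SFin A)]
  refine Nat.add_le_add_right ?_ _
  -- a lost point has `y` as one of its facets
  have hlost : ∀ z ∈ SFin A \ SFin A', (∀ k, 0 < z k) ∧ (∀ k, Function.update z k 0 ∈ A) ∧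
      ∃ k, Function.update z k 0 = y := by
    intro z hz
    rw [Finset.mem_sdiff, mem_SFin hn, mem_SFin hn] at hz
    refine ⟨hz.1.1, hz.1.2, ?_⟩
    by_contra hno
    push Not at hno
    exact hz.2 ⟨hz.1.1, fun k => Finset.mem_insert_of_mem
      (Finset.mem_erase.2 ⟨hno k, hz.1.2 k⟩)⟩
  rcases (SFin A \ SFin A').eq_empty_or_nonempty with hemp | ⟨z, hz⟩
  · rw [hemp]; simp
  obtain ⟨hzpos, hzA, k, hzk⟩ := hlost z hz
  have hyk : y k = 0 := by rw [← hzk]; simp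
  have hyj : ∀ j, j ≠ k → y j = z j := by
    intro j hj; rw [← hzk]; simp [hj]
  have hypos : ∀ j, j ≠ k → 0 < y j := fun j hj => by rw [hyj j hj]; exact hzpos j
  have hkp : k ≠ p := by rintro rfl; omega
  have hrk : r ≠ k := by
    rintro rfl
    refine hxA (hs r x y ⟨r, hr⟩ hy (by omega) (iff_of_false ?_ ?_) hlt)
    · rintro ⟨j, hj, h0⟩; have := huniq j hj; omega
    · rintro ⟨j, hj, h0⟩; have := hypos j hj; omega
  have hrp : r = p := by
    by_contra hrp
    refine hxA (hs r x _ ⟨r, hr⟩ (hzA r) (by simp [hr]) (iff_of_false ?_ ?_) (hbeat _ ?_))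
    · rintro ⟨j, hj, h0⟩; have := huniq j hj; omega
    · rintro ⟨j, hj, h0⟩
      have := hzpos j
      simp [hj] at h0; omega
    · rw [Function.update_of_ne (Ne.symm hrp)]; exact (hyj p hkp.symm).symm
  subst hrp
  -- the lost points are `y + c e_k` with `1 ≤ c < x k ≤ y p`
  have hL : SFin A \ SFin A' ⊆ (Finset.Ico 1 (y r)).image fun c => Function.update y k c := by
    intro w hw
    obtain ⟨hwpos, hwA, k', hwk⟩ := hlost w hw
    have hk' : k' = k := by
      by_contra hne
      have h1 := hypos k' hne
      rw [← hwk] at h1; simp at h1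
    subst hk'
    refine Finset.mem_image.2 ⟨w k', Finset.mem_Ico.2 ⟨hwpos k', ?_⟩, ?_⟩
    · refine lt_of_lt_of_le ?_ (hle k')
      by_contra hge
      push Not at hge
      have hwr : w r = y r := by rw [← hwk]; simp [hkp.symm]
      by_cases hj : ∃ j, j ≠ r ∧ j ≠ k'
      · obtain ⟨j, hjr, hjk⟩ := hj
        have hm : Function.update (Function.update (0 : Fin n → ℕ) r (y r)) k' (x k') ∈ A := by
          refine hA _ _ ?_ (hwA j)
          rw [update_le_iff]
          refine ⟨by simpa [hjk.symm] using hge, fun i _ => ?_⟩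
          by_cases hir : i = r
          · subst hir; simp [hjr.symm, hwr]
          · simp [hir]
        exact hxA (hs.of_pos hAX ⟨r, hr⟩ (i := k') hm (by simp) (huniq k' hkp).ne'
          (hbeat _ (by simp [hkp.symm])))
      · push Not at hj
        refine hxA (hA x _ (fun j => ?_) (hwA r))
        by_cases hjr : j = r
        · rw [hjr, hr]; exact Nat.zero_le _
        · rw [Function.update_of_ne hjr, hj j hjr]; exact hge
    · rw [← hwk]; simp
  -- and `x + c e_p` with `1 ≤ c < y p` are gained
  have hG : ((Finset.Ico 1 (y r)).image fun c => Function.update x r c) ⊆ SFin A' \ SFin A := by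
    intro w hw
    obtain ⟨c, hc, rfl⟩ := Finset.mem_image.1 hw
    rw [Finset.mem_Ico] at hc
    have hself : Function.update (Function.update x r c) r 0 = x := by simp [← hr]
    have hcpos : ∀ j, 0 < Function.update x r c j := by
      intro j
      by_cases hj : j = r
      · subst hj; simp; omega
      · simpa [hj] using huniq j hj
    rw [Finset.mem_sdiff, mem_SFin hn, mem_SFin hn]
    refine ⟨⟨hcpos, fun j => ?_⟩, fun hh => hxA (by rw [← hself]; exact hh.2 r)⟩
    by_cases hj : j = r
    · subst hj; rw [hself]; exact Finset.mem_insert_self _ _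
    refine Finset.mem_insert_of_mem (Finset.mem_erase.2 ⟨?_, ?_⟩)
    · intro he
      have := congrFun he r
      simp [Ne.symm hj] at this
      omega
    · set v := Function.update (Function.update x r c) j 0 with hv
      have hvr : v r = c := by simp [hv, Ne.symm hj]
      have hvlt : ∀ u : Fin n → ℕ, u r = y r → key N σ v < key N σ u := by
        intro u hu
        have hup : expo N σ u r = expo N σ y r := by simp [expo, hu]
        refine key_lt_of hσ r (by omega) fun i _ => ?_
        rw [hup]
        by_cases hir : i = r
        · subst hir; exact (expo_lt_iff hσ).2 (Or.inl (by omega))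
        · refine lt_of_le_of_lt ?_ (hF i)
          refine Nat.add_le_add_right (Nat.mul_le_mul_left _ ?_) _
          by_cases hij : i = j
          · subst hij; simp [hv]
          · simp [hv, hij, hir]
      have hvX : v ∈ XNat n := ⟨j, by simp [hv]⟩
      have hv1 : ¬ ∃ i, i ≠ j ∧ v i = 0 := by
        rintro ⟨i, hij, h0⟩
        have := hcpos i
        rw [hv, Function.update_of_ne hij] at h0; omega
      by_cases hjk : j = k
      · subst hjk
        refine hs j v y hvX hy (by simp [hv, hyk]) (iff_of_false hv1 ?_) (hvlt y rfl)
        rintro ⟨i, hij, h0⟩; have := hypos i hij; omega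
      · refine hs j v _ hvX (hzA j) (by simp [hv]) (iff_of_false hv1 ?_) (hvlt _ ?_)
        · rintro ⟨i, hij, h0⟩
          have := hzpos i
          rw [Function.update_of_ne hij] at h0; omega
        · rw [Function.update_of_ne (Ne.symm hj)]; exact (hyj r hkp.symm).symm
  calc (SFin A \ SFin A').card ≤ _ := Finset.card_le_card hL
    _ ≤ (Finset.Ico 1 (y r)).card := Finset.card_image_le
    _ = ((Finset.Ico 1 (y r)).image fun c => Function.update x r c).card :=
        (Finset.card_image_of_injective _ (Function.update_injective x r)).symm
    _ ≤ _ := Finset.card_le_card hG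

/-- A stable down-set which is not an initial segment can be replaced by one of smaller total key
without decreasing `|S(A)|`. -/
lemma exists_swap (hn : 2 ≤ n) (hσ : Labels N σ) (hAX : ↑A ⊆ XNat n) (hA : DownNat A)
    (hs : Stable N σ A) (hni : ¬ IsInit (key N σ) (XNat n) A) :
    ∃ A' : Finset (Fin n → ℕ), ↑A' ⊆ XNat n ∧ DownNat A' ∧ A'.card = A.card ∧
      (SFin A).card ≤ (SFin A').card ∧ ∑ x ∈ A', key N σ x < ∑ x ∈ A, key N σ x := by
  classical
  have : ∃ y₀ ∈ A, ∃ x₀ ∈ XNat n, key N σ x₀ < key N σ y₀ ∧ x₀ ∉ A := by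
    by_contra hno
    push Not at hno
    exact hni ⟨hAX, hno⟩
  obtain ⟨y₀, hy₀, x₀, hx₀, hlt₀, hx₀A⟩ := this
  obtain ⟨y, hy, hymax⟩ := Finset.exists_max_image A (key N σ) ⟨y₀, hy₀⟩
  obtain ⟨x, ⟨hxX, hxA⟩, hmin⟩ :=
    exists_minimalFor_of_wellFoundedLT (· ∈ XNat n \ ↑A) (key N σ) ⟨x₀, hx₀, hx₀A⟩
  have hxA : x ∉ A := hxA
  have hlt : key N σ x < key N σ y := by
    have h1 : key N σ x ≤ key N σ x₀ := by
      by_contra hcon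
      have := hmin ⟨hx₀, hx₀A⟩ (by omega)
      omega
    have h2 := hymax y₀ hy₀
    omega
  refine ⟨insert x (A.erase y), ?_, ?_, ?_, swap_card_le hn hσ hAX hA hs hxX hxA hy hlt, ?_⟩
  · intro w hw
    rcases Finset.mem_insert.1 (Finset.mem_coe.1 hw) with rfl | hw
    · exact hxX
    · exact hAX (Finset.mem_of_mem_erase hw)
  · intro u v huv hv
    by_cases hux : u = x
    · rw [hux]; exact Finset.mem_insert_self _ _
    refine Finset.mem_insert_of_mem (Finset.mem_erase.2 ?_)
    rcases Finset.mem_insert.1 hv with rfl | hv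
    · have hk : key N σ u < key N σ v :=
        lt_of_le_of_ne (key_mono huv) fun h => hux (key_injective hσ h)
      refine ⟨by rintro rfl; omega, ?_⟩
      by_contra huA
      obtain ⟨i, hi⟩ := hxX
      have := hmin (⟨⟨i, Nat.le_zero.1 (hi ▸ huv i)⟩, huA⟩ : u ∈ XNat n \ ↑A) hk.le
      omega
    · obtain ⟨hvy, hvA⟩ := Finset.mem_erase.1 hv
      refine ⟨?_, hA u v huv hvA⟩
      rintro rfl
      exact hvy (key_injective hσ (le_antisymm (hymax v hvA) (key_mono huv)))
  · rw [Finset.card_insert_of_notMem (fun h => hxA (Finset.mem_of_mem_erase h)),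
      Finset.card_erase_add_one hy]
  · rw [Finset.sum_insert (fun h => hxA (Finset.mem_of_mem_erase h)),
      ← Finset.add_sum_erase A _ hy]
    omega

/-- In dimension two every down-set is stable. -/
lemma stable_two {σ : Fin 2 → ℕ} {A : Finset (Fin 2 → ℕ)}
    (hA : DownNat A) : Stable N σ A := by
  intro i x y hx hy hxi hty hlt
  obtain ⟨o, ho, hall⟩ : ∃ o : Fin 2, o ≠ i ∧ ∀ j, j = i ∨ j = o := by
    fin_cases i
    · exact ⟨1, by decide, by decide⟩
    · exact ⟨0, by decide, by decide⟩
  refine hA x y (fun j => ?_) hy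
  rcases hall j with hj | hj
  · rw [hj]; exact hxi.le
  by_contra hcon
  have hle : y ≤ x := by
    intro l
    rcases hall l with hl | hl
    · rw [hl]; exact hxi.ge
    · rw [hl, ← hj]; exact (not_le.1 hcon).le
  have := key_mono (N := N) (σ := σ) hle
  omega

end Swap

/-! ### Slices and compression -/

/-- The point with entry `a` in position `i` and the entries of `x` elsewhere. -/
abbrev ins {n : ℕ} (i : Fin (n + 1)) (a : ℕ) (x : Fin n → ℕ) : Fin (n + 1) → ℕ :=
  i.insertNth (α := fun _ => ℕ) a x

section Ins

variable {n : ℕ} {i : Fin (n + 1)}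

lemma exists_ins (i : Fin (n + 1)) (x : Fin (n + 1) → ℕ) : ∃ a x', x = ins i a x' :=
  ⟨x i, i.removeNth x, by simp [ins]⟩

lemma ins_eq_iff {a b : ℕ} {x y : Fin n → ℕ} : ins i a x = ins i b y ↔ a = b ∧ x = y := by
  constructor
  · intro h
    refine ⟨by simpa [ins] using congrFun h i, funext fun j => ?_⟩
    simpa [ins] using congrFun h (i.succAbove j)
  · rintro ⟨rfl, rfl⟩; rfl

lemma ins_le_iff {a b : ℕ} {x y : Fin n → ℕ} : ins i a x ≤ ins i b y ↔ a ≤ b ∧ x ≤ y := by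
  rw [Pi.le_def, Fin.forall_iff_succAbove i]
  simp [ins, Pi.le_def]

lemma update_ins_self {a b : ℕ} {x : Fin n → ℕ} :
    Function.update (ins i a x) i b = ins i b x := by
  funext j
  refine Fin.succAboveCases i ?_ (fun k => ?_) j <;> simp [ins]

lemma update_ins_succAbove {a b : ℕ} {x : Fin n → ℕ} {j : Fin n} :
    Function.update (ins i a x) (i.succAbove j) b = ins i a (Function.update x j b) := by
  funext l
  refine Fin.succAboveCases i ?_ (fun k => ?_) l
  · simp [ins, (Fin.succAbove_ne i j).symm]
  · by_cases h : k = j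
    · subst h; simp [ins]
    · simp [ins, h]

lemma ins_mem_XNat {a : ℕ} {x : Fin n → ℕ} : ins i a x ∈ XNat (n + 1) ↔ a = 0 ∨ x ∈ XNat n := by
  simp [XNat, ins, Fin.exists_iff_succAbove i]

lemma exists_zero_off {a : ℕ} {x : Fin n → ℕ} :
    (∃ j, j ≠ i ∧ ins i a x j = 0) ↔ x ∈ XNat n := by
  rw [Fin.exists_iff_succAbove i]
  simp [XNat, ins]

lemma mem_XNat_or_PosNat (x : Fin n → ℕ) : x ∈ XNat n ∨ x ∈ PosNat n := by
  by_cases h : ∃ j, x j = 0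
  · exact Or.inl h
  · push Not at h
    exact Or.inr fun j => Nat.pos_of_ne_zero (h j)

lemma not_mem_PosNat {x : Fin n → ℕ} (hx : x ∈ XNat n) : x ∉ PosNat n := by
  rintro h
  obtain ⟨j, hj⟩ := hx
  exact (h j).ne' hj

end Ins

/-- The points of `X_n` which give elements of `A` when `a` is inserted in position `i`. -/
noncomputable def slice {n : ℕ} (i : Fin (n + 1)) (A : Finset (Fin (n + 1) → ℕ)) (a : ℕ) :
    Finset (Fin n → ℕ) := by
  classical
  exact ((A.filter fun x => x i = a).image fun x => i.removeNth x).filter fun x => x ∈ XNat n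

/-- The positive points which give elements of `A` when `0` is inserted in position `i`. -/
noncomputable def core {n : ℕ} (i : Fin (n + 1)) (A : Finset (Fin (n + 1) → ℕ)) :
    Finset (Fin n → ℕ) := by
  classical
  exact ((A.filter fun x => x i = 0).image fun x => i.removeNth x).filter fun x => x ∈ PosNat n

/-- The set whose slices below level `B` are `J` and whose core is `K`. -/
noncomputable def assemble {n : ℕ} (i : Fin (n + 1)) (B : ℕ) (J : ℕ → Finset (Fin n → ℕ))
    (K : Finset (Fin n → ℕ)) : Finset (Fin (n + 1) → ℕ) := by
  classical
  exact (Finset.range B).biUnion (fun a => (J a).image (ins i a)) ∪ K.image (ins i 0)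

section Assemble

variable {n : ℕ} {i : Fin (n + 1)} {A : Finset (Fin (n + 1) → ℕ)} {B : ℕ}
  {J : ℕ → Finset (Fin n → ℕ)} {K : Finset (Fin n → ℕ)}

lemma mem_image_removeNth {a : ℕ} {x : Fin n → ℕ} :
    x ∈ (A.filter fun x => x i = a).image (fun x => i.removeNth x) ↔ ins i a x ∈ A := by
  rw [Finset.mem_image]
  constructor
  · rintro ⟨y, hy, rfl⟩
    obtain ⟨hyA, rfl⟩ := Finset.mem_filter.1 hy
    simpa [ins] using hyA
  · intro h
    exact ⟨ins i a x, Finset.mem_filter.2 ⟨h, by simp [ins]⟩, by simp [ins]⟩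

lemma mem_slice {a : ℕ} {x : Fin n → ℕ} :
    x ∈ slice i A a ↔ ins i a x ∈ A ∧ x ∈ XNat n := by
  classical
  unfold slice
  rw [Finset.mem_filter]
  exact and_congr_left' mem_image_removeNth

lemma mem_core {x : Fin n → ℕ} : x ∈ core i A ↔ ins i 0 x ∈ A ∧ x ∈ PosNat n := by
  classical
  unfold core
  rw [Finset.mem_filter]
  exact and_congr_left' mem_image_removeNth

lemma mem_assemble {a : ℕ} {x : Fin n → ℕ} :
    ins i a x ∈ assemble i B J K ↔ (a < B ∧ x ∈ J a) ∨ (a = 0 ∧ x ∈ K) := by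
  classical
  unfold assemble
  simp only [Finset.mem_union, Finset.mem_biUnion, Finset.mem_image, Finset.mem_range, ins_eq_iff]
  constructor
  · rintro (⟨b, hb, y, hy, rfl, rfl⟩ | ⟨y, hy, rfl, rfl⟩)
    · exact Or.inl ⟨hb, hy⟩
    · exact Or.inr ⟨rfl, hy⟩
  · rintro (⟨hb, hx⟩ | ⟨rfl, hx⟩)
    · exact Or.inl ⟨a, hb, x, hx, rfl, rfl⟩
    · exact Or.inr ⟨x, hx, rfl, rfl⟩

lemma assemble_slice_core (hAX : ↑A ⊆ XNat (n + 1)) (hB : ∀ x ∈ A, x i < B) :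
    assemble i B (slice i A) (core i A) = A := by
  ext z
  obtain ⟨a, x, rfl⟩ := exists_ins i z
  rw [mem_assemble, mem_slice, mem_core]
  constructor
  · rintro (⟨_, h, _⟩ | ⟨rfl, h, _⟩) <;> exact h
  · intro h
    rcases mem_XNat_or_PosNat x with hx | hx
    · exact Or.inl ⟨by simpa [ins] using hB _ h, h, hx⟩
    · rcases ins_mem_XNat.1 (hAX h) with rfl | hx'
      · exact Or.inr ⟨rfl, h, hx⟩
      · exact absurd hx (not_mem_PosNat hx')

lemma sum_assemble (hJ : ∀ a, ↑(J a) ⊆ XNat n) (hK : ↑K ⊆ PosNat n)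
    (f : (Fin (n + 1) → ℕ) → ℕ) :
    ∑ x ∈ assemble i B J K, f x
      = ∑ a ∈ Finset.range B, ∑ x ∈ J a, f (ins i a x) + ∑ x ∈ K, f (ins i 0 x) := by
  classical
  have hinj : ∀ a, Function.Injective (ins i a) := fun a x y h => (ins_eq_iff.1 h).2
  unfold assemble
  rw [Finset.sum_union, Finset.sum_biUnion]
  · congr 1
    · exact Finset.sum_congr rfl fun a _ => Finset.sum_image fun x _ y _ h => hinj a h
    · exact Finset.sum_image fun x _ y _ h => hinj 0 h
  · intro a _ b _ hab
    refine Finset.disjoint_left.2 fun z hz hz' => hab ?_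
    obtain ⟨x, _, rfl⟩ := Finset.mem_image.1 hz
    obtain ⟨y, _, hy⟩ := Finset.mem_image.1 hz'
    exact (ins_eq_iff.1 hy).1.symm
  · refine Finset.disjoint_left.2 fun z hz hz' => ?_
    obtain ⟨y, hy, rfl⟩ := Finset.mem_image.1 hz'
    obtain ⟨a, _, hz⟩ := Finset.mem_biUnion.1 hz
    obtain ⟨x, hx, hxy⟩ := Finset.mem_image.1 hz
    obtain ⟨_, rfl⟩ := ins_eq_iff.1 hxy
    exact not_mem_PosNat (hJ a hx) (hK hy)

lemma card_assemble (hJ : ∀ a, ↑(J a) ⊆ XNat n) (hK : ↑K ⊆ PosNat n) :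
    (assemble i B J K).card = ∑ a ∈ Finset.range B, (J a).card + K.card := by
  simpa using sum_assemble (i := i) (B := B) hJ hK fun _ => 1

/-- Counting `S` by the positive value of the coordinate `i`. -/
lemma card_SFin_assemble (hn : 2 ≤ n) (hJ : ∀ a, ↑(J a) ⊆ XNat n) :
    (SFin (assemble i B J K)).card = ∑ a ∈ Finset.Ico 1 B, (SFin (J a) ∩ K).card := by
  classical
  have hinj : ∀ a, Function.Injective (ins i a) := fun a x y h => (ins_eq_iff.1 h).2
  have heq : SFin (assemble i B J K)
      = (Finset.Ico 1 B).biUnion fun a => (SFin (J a) ∩ K).image (ins i a) := by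
    ext z
    obtain ⟨a, x, rfl⟩ := exists_ins i z
    simp only [Finset.mem_biUnion, Finset.mem_image, ins_eq_iff]
    rw [mem_SFin (by omega), Fin.forall_iff_succAbove i, Fin.forall_iff_succAbove i,
      update_ins_self]
    simp only [update_ins_succAbove, mem_assemble]
    constructor
    · rintro ⟨⟨ha, hx⟩, h0, h1⟩
      have ha : 0 < a := by simpa [ins] using ha
      have hx : ∀ k, 0 < x k := fun k => by simpa [ins] using hx k
      have h1' : ∀ k, a < B ∧ Function.update x k 0 ∈ J a := by
        intro k
        rcases h1 k with h | ⟨h, _⟩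
        · exact h
        · omega
      refine ⟨a, Finset.mem_Ico.2 ⟨ha, (h1' ⟨0, by omega⟩).1⟩, x, ?_, rfl, rfl⟩
      rw [Finset.mem_inter, mem_SFin hn]
      refine ⟨⟨hx, fun k => (h1' k).2⟩, ?_⟩
      rcases h0 with ⟨_, h⟩ | ⟨_, h⟩
      · exact absurd hx (not_mem_PosNat (hJ 0 h))
      · exact h
    · rintro ⟨b, hb, y, hy, rfl, rfl⟩
      rw [Finset.mem_inter, mem_SFin hn] at hy
      rw [Finset.mem_Ico] at hb
      refine ⟨⟨by simp [ins]; omega, fun k => by simpa [ins] using hy.1.1 k⟩, Or.inr ⟨by simp, hy.2⟩,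
        fun k => Or.inl ⟨hb.2, hy.1.2 k⟩⟩
  rw [heq, Finset.card_biUnion]
  · exact Finset.sum_congr rfl fun a _ => Finset.card_image_of_injective _ (hinj a)
  · intro a _ b _ hab
    refine Finset.disjoint_left.2 fun z hz hz' => hab ?_
    obtain ⟨x, _, rfl⟩ := Finset.mem_image.1 hz
    obtain ⟨y, _, hy⟩ := Finset.mem_image.1 hz'
    exact (ins_eq_iff.1 hy).1.symm

end Assemble

lemma XNat_infinite {n : ℕ} (hn : 2 ≤ n) : (XNat n).Infinite := by
  refine Set.infinite_of_injective_forall_mem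
    (f := fun c : ℕ => Function.update (0 : Fin n → ℕ) ⟨0, by omega⟩ c)
    (Function.update_injective (0 : Fin n → ℕ) _) fun c => ⟨⟨1, by omega⟩, ?_⟩
  simp

lemma PosNat_infinite {n : ℕ} (hn : 2 ≤ n) : (PosNat n).Infinite := by
  refine Set.infinite_of_injective_forall_mem (f := fun (c : ℕ) (_ : Fin n) => c + 1) ?_
    fun c _ => Nat.succ_pos c
  intro a b h
  simpa using congrFun h ⟨0, by omega⟩

section Compress

variable {n N : ℕ}

lemma IsInit.down {σ : Fin n → ℕ} (hσ : Labels N σ) {Y : Set (Fin n → ℕ)}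
    {J : Finset (Fin n → ℕ)} (hJ : IsInit (key N σ) Y J) {x y : Fin n → ℕ} (hxy : x ≤ y)
    (hx : x ∈ Y) (hy : y ∈ J) : x ∈ J := by
  rcases (key_mono (N := N) (σ := σ) hxy).lt_or_eq with h | h
  · exact hJ.2 y hy x hx h
  · rw [key_injective hσ h]; exact hy

/-- `S` of an initial segment of `X_n` is an initial segment of the positive points. -/
lemma IsInit.SFin {σ : Fin n → ℕ} (hn : 2 ≤ n) (hσ : Labels N σ) {J : Finset (Fin n → ℕ)}
    (hJ : IsInit (key N σ) (XNat n) J) : IsInit (key N σ) (PosNat n) (SFin J) := by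
  refine ⟨fun x hx => ((mem_SFin hn).1 hx).1, fun z hz w hw hlt => ?_⟩
  obtain ⟨hzpos, hzJ⟩ := (mem_SFin hn).1 hz
  refine (mem_SFin hn).2 ⟨hw, fun k => ?_⟩
  have hwX : Function.update w k 0 ∈ XNat n := ⟨k, by simp⟩
  obtain ⟨p, hp, hT⟩ := exists_top_of_key_lt hσ hlt
  -- a facet of `z` that keeps the top coordinate `p` and dominates the facet of `w` at `k`
  have hdom : ∀ j, j ≠ p → (j = k ∨ (k = p ∧ w j ≠ z j)) → Function.update w k 0 ∈ J := by
    intro j hjp hj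
    refine hJ.2 _ (hzJ j) _ hwX ?_
    have hzp : Function.update z j 0 p = z p := Function.update_of_ne hjp.symm _ _
    have he : expo N σ (Function.update z j 0) p = expo N σ z p := by simp [expo, hzp]
    have hwle : ∀ i, expo N σ (Function.update w k 0) i ≤ expo N σ w i := by
      intro i
      refine Nat.add_le_add_right (Nat.mul_le_mul_left _ ?_) _
      by_cases hik : i = k
      · subst hik; simp
      · simp [hik]
    refine key_lt_of hσ p ?_ fun i hi => ?_
    · rw [hzp]
      by_cases hpk : p = k
      · subst hpk; simpa using hzpos p
      · rw [Function.update_of_ne hpk]; exact hp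
    · rw [he]
      refine lt_of_le_of_lt (hwle i) (hT i fun hwz => ?_).1
      by_cases hij : i = j
      · subst hij
        rcases hj with rfl | ⟨_, hj⟩
        · simp at hi
        · exact hj hwz
      · by_cases hik : i = k
        · subst hik
          rcases hj with rfl | ⟨rfl, hj⟩
          · exact hij rfl
          · omega
        · simp [hij, hik, hwz] at hi
  by_cases hkp : k = p
  · by_cases hex : ∃ j, j ≠ p ∧ w j ≠ z j
    · obtain ⟨j, hjp, hj⟩ := hex
      exact hdom j hjp (Or.inr ⟨hkp, hj⟩)
    · push Not at hex
      refine hJ.down hσ ?_ hwX (hzJ k)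
      intro j
      by_cases hj : j = k
      · subst hj; simp
      · simp [hj, (hex j (hkp ▸ hj)).le]
  · exact hdom k hkp (Or.inl rfl)

/-- The compression step: unless `A` already has initial slices and an initial core in direction
`i`, replacing them by initial segments of the same sizes gives a down-set of smaller total key, and
by the result one dimension lower `|S(A)|` does not decrease. -/
lemma exists_compress (hn : 2 ≤ n) {σ : Fin (n + 1) → ℕ} (hσ : Labels N σ) (i : Fin (n + 1))
    (IH : ∀ L J : Finset (Fin n → ℕ), ↑L ⊆ XNat n → DownNat L →
      IsInit (key N (σ ∘ i.succAbove)) (XNat n) J → J.card = L.card →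
      (SFin L).card ≤ (SFin J).card)
    {A : Finset (Fin (n + 1) → ℕ)} (hAX : ↑A ⊆ XNat (n + 1)) (hA : DownNat A)
    (hni : ¬ ((∀ a, IsInit (key N (σ ∘ i.succAbove)) (XNat n) (slice i A a)) ∧
      IsInit (key N (σ ∘ i.succAbove)) (PosNat n) (core i A))) :
    ∃ A' : Finset (Fin (n + 1) → ℕ), ↑A' ⊆ XNat (n + 1) ∧ DownNat A' ∧ A'.card = A.card ∧
      (SFin A).card ≤ (SFin A').card ∧ ∑ x ∈ A', key N σ x < ∑ x ∈ A, key N σ x := by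
  classical
  have hτ := hσ.comp_succAbove i
  set τ := σ ∘ i.succAbove with hτdef
  have hinj := key_injective hτ
  choose T hT hTc using fun m => exists_init (f := key N τ) (XNat_infinite hn) m
  obtain ⟨K, hK, hKc⟩ := exists_init (f := key N τ) (PosNat_infinite hn) (core i A).card
  set J : ℕ → Finset (Fin n → ℕ) := fun a => T (slice i A a).card with hJdef
  have hJ : ∀ a, IsInit (key N τ) (XNat n) (J a) := fun a => hT _
  have hJc : ∀ a, (J a).card = (slice i A a).card := fun a => hTc _
  have hJX : ∀ a, ↑(J a) ⊆ XNat n := fun a => (hJ a).1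
  have hsX : ∀ a, ↑(slice i A a) ⊆ XNat n := fun a x hx => (mem_slice.1 hx).2
  have hcP : ↑(core i A) ⊆ PosNat n := fun x hx => (mem_core.1 hx).2
  obtain ⟨B, hB⟩ : ∃ B, ∀ x ∈ A, x i < B :=
    ⟨A.sup (fun x => x i) + 1, fun x hx =>
      Nat.lt_succ_of_le (Finset.le_sup (f := fun x : Fin (n + 1) → ℕ => x i) hx)⟩
  have hsd : ∀ a, DownNat (slice i A a) := by
    intro a x y hxy hy
    obtain ⟨hyA, k, hk⟩ := mem_slice.1 hy
    exact mem_slice.2 ⟨hA _ _ (ins_le_iff.2 ⟨le_rfl, hxy⟩) hyA, k, Nat.le_zero.1 (hk ▸ hxy k)⟩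
  have hSle : ∀ a, (SFin (slice i A a)).card ≤ (SFin (J a)).card := fun a =>
    IH _ _ (hsX a) (hsd a) (hJ a) (hJc a)
  have hnest : ∀ a b, a ≤ b → J b ⊆ J a := by
    intro a b hab
    refine (hJ b).subset_of_card_le hinj (hJ a) ?_
    rw [hJc, hJc]
    refine Finset.card_le_card fun x hx => ?_
    obtain ⟨h1, h2⟩ := mem_slice.1 hx
    exact mem_slice.2 ⟨hA _ _ (ins_le_iff.2 ⟨hab, le_rfl⟩) h1, h2⟩
  have hKS : K ⊆ SFin (J 0) := by
    refine hK.subset_of_card_le hinj ((hJ 0).SFin hn hτ) ?_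
    rw [hKc]
    refine le_trans (Finset.card_le_card fun x hx => ?_) (hSle 0)
    obtain ⟨h1, h2⟩ := mem_core.1 hx
    refine (mem_SFin hn).2 ⟨h2, fun k => mem_slice.2 ⟨hA _ _ (ins_le_iff.2 ⟨le_rfl, ?_⟩) h1,
      k, by simp⟩⟩
    rw [update_le_iff]
    exact ⟨Nat.zero_le _, fun _ _ => le_rfl⟩
  have hAeq := assemble_slice_core hAX hB
  refine ⟨assemble i B J K, ?_, ?_, ?_, ?_, ?_⟩
  · intro z hz
    obtain ⟨a, x, rfl⟩ := exists_ins i z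
    rcases mem_assemble.1 (Finset.mem_coe.1 hz) with ⟨_, h⟩ | ⟨h, _⟩
    · exact ins_mem_XNat.2 (Or.inr (hJX a h))
    · exact ins_mem_XNat.2 (Or.inl h)
  · intro u v huv hv
    obtain ⟨a, x, rfl⟩ := exists_ins i u
    obtain ⟨b, y, rfl⟩ := exists_ins i v
    obtain ⟨hab, hxy⟩ := ins_le_iff.1 huv
    rw [mem_assemble] at hv ⊢
    rcases hv with ⟨hb, hy⟩ | ⟨rfl, hy⟩
    · obtain ⟨k, hk⟩ := hJX b hy
      exact Or.inl ⟨by omega, hnest a b hab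
        ((hJ b).down hτ hxy ⟨k, Nat.le_zero.1 (hk ▸ hxy k)⟩ hy)⟩
    · obtain rfl : a = 0 := by omega
      rcases mem_XNat_or_PosNat x with hx | hx
      · left
        have hBpos : 0 < B := by
          have : 0 < (core i A).card := hKc ▸ Finset.card_pos.2 ⟨y, hy⟩
          obtain ⟨w, hw⟩ := Finset.card_pos.1 this
          have := hB _ (mem_core.1 hw).1
          omega
        refine ⟨hBpos, ?_⟩
        obtain ⟨k, hk⟩ := id hx
        refine (hJ 0).down hτ ?_ hx (((mem_SFin hn).1 (hKS hy)).2 k)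
        rw [le_update_iff]
        exact ⟨hk.le, fun j _ => hxy j⟩
      · exact Or.inr ⟨rfl, hK.down hτ hxy hx hy⟩
  · rw [card_assemble hJX hK.1, hKc]
    simp only [hJc]
    rw [← card_assemble (i := i) hsX hcP, hAeq]
  · rw [← hAeq, card_SFin_assemble hn hsX, card_SFin_assemble hn hJX]
    refine Finset.sum_le_sum fun a _ => ?_
    -- two initial segments are nested, so their intersection is the smaller of them
    rcases le_total (SFin (J a)).card K.card with h | h
    · rw [Finset.inter_eq_left.2 (((hJ a).SFin hn hτ).subset_of_card_le hinj hK h)]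
      exact (Finset.card_le_card Finset.inter_subset_left).trans (hSle a)
    · rw [Finset.inter_eq_right.2 (hK.subset_of_card_le hinj ((hJ a).SFin hn hτ) h), hKc]
      exact Finset.card_le_card Finset.inter_subset_right
  · conv_rhs => rw [← hAeq]
    rw [sum_assemble hJX hK.1, sum_assemble hsX hcP]
    simp only [ins, key_insertNth, Finset.sum_add_distrib, Finset.sum_const, hJc, hKc, ← hτdef]
    have h1 : ∀ a ∈ Finset.range B,
        ∑ x ∈ J a, key N τ x ≤ ∑ x ∈ slice i A a, key N τ x :=
      fun a _ => (hJ a).sum_le hinj (hsX a) (hJc a)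
    have h2 : ∑ x ∈ K, key N τ x ≤ ∑ x ∈ core i A, key N τ x := hK.sum_le hinj hcP hKc
    have h1' := Finset.sum_le_sum h1
    rw [not_and_or] at hni
    rcases hni with hni | hni
    · push Not at hni
      obtain ⟨a, ha⟩ := hni
      have haB : a < B := by
        by_contra hcon
        refine ha ⟨hsX a, fun x hx => ?_⟩
        have := hB _ (mem_slice.1 hx).1
        simp [ins] at this
        omega
      have := Finset.sum_lt_sum h1 ⟨a, Finset.mem_range.2 haB,
        (hJ a).sum_lt hinj (hsX a) (hJc a) fun h => ha (h ▸ hJ a)⟩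
      omega
    · have := hK.sum_lt hinj hcP hKc fun h => hni (h ▸ hK)
      omega

/-- A set whose slices and cores in all directions are initial segments is stable. -/
lemma stable_of_init {σ : Fin (n + 1) → ℕ} {A : Finset (Fin (n + 1) → ℕ)}
    (hAX : ↑A ⊆ XNat (n + 1))
    (h : ∀ i : Fin (n + 1), (∀ a, IsInit (key N (σ ∘ i.succAbove)) (XNat n) (slice i A a)) ∧
      IsInit (key N (σ ∘ i.succAbove)) (PosNat n) (core i A)) : Stable N σ A := by
  intro i u v hu hv huv hty hlt
  obtain ⟨a, x, rfl⟩ := exists_ins i u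
  obtain ⟨b, y, rfl⟩ := exists_ins i v
  obtain rfl : a = b := by simpa [ins] using huv
  rw [exists_zero_off, exists_zero_off] at hty
  rw [key_insertNth, key_insertNth] at hlt
  replace hlt : key N (σ ∘ i.succAbove) x < key N (σ ∘ i.succAbove) y := Nat.lt_of_add_lt_add_left hlt
  rcases mem_XNat_or_PosNat y with hy | hy
  · exact (mem_slice.1 (((h i).1 a).2 y (mem_slice.2 ⟨hv, hy⟩) x (hty.2 hy) hlt)).1
  · have hy' : y ∉ XNat n := fun h' => not_mem_PosNat h' hy
    obtain rfl : a = 0 := (ins_mem_XNat.1 (hAX hv)).resolve_right hy'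
    have hx : x ∈ PosNat n := (mem_XNat_or_PosNat x).resolve_left fun h' => hy' (hty.1 h')
    exact (mem_core.1 ((h i).2.2 y (mem_core.2 ⟨hv, hy⟩) x hx hlt)).1

end Compress

/-! ### The extremal theorem -/

/-- The extremal statement over `ℕ`, for arbitrary tie-breaking labels. -/
theorem card_SFin_le {n : ℕ} (hn : 2 ≤ n) {N : ℕ} : ∀ {σ : Fin n → ℕ}, Labels N σ →
    ∀ A I : Finset (Fin n → ℕ), ↑A ⊆ XNat n → DownNat A → IsInit (key N σ) (XNat n) I →
    I.card = A.card → (SFin A).card ≤ (SFin I).card := by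
  induction n, hn using Nat.le_induction with
  | base =>
    intro σ hσ A I hAX hA hI hc
    induction hw : ∑ x ∈ A, key N σ x using Nat.strong_induction_on generalizing A with
    | _ w ih =>
    by_cases hin : IsInit (key N σ) (XNat 2) A
    · rw [Finset.eq_of_subset_of_card_le
        (hin.subset_of_card_le (key_injective hσ) hI hc.ge) hc.le]
    · obtain ⟨A', h1, h2, h3, h4, h5⟩ := exists_swap le_rfl hσ hAX hA (stable_two hA) hin
      exact h4.trans (ih _ (hw ▸ h5) A' h1 h2 (hc.trans h3.symm) rfl)
  | succ n hn IH =>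
    intro σ hσ A I hAX hA hI hc
    induction hw : ∑ x ∈ A, key N σ x using Nat.strong_induction_on generalizing A with
    | _ w ih =>
    by_cases hin : IsInit (key N σ) (XNat (n + 1)) A
    · rw [Finset.eq_of_subset_of_card_le
        (hin.subset_of_card_le (key_injective hσ) hI hc.ge) hc.le]
    · obtain ⟨A', h1, h2, h3, h4, h5⟩ : ∃ A' : Finset (Fin (n + 1) → ℕ), ↑A' ⊆ XNat (n + 1) ∧
          DownNat A' ∧ A'.card = A.card ∧ (SFin A).card ≤ (SFin A').card ∧
          ∑ x ∈ A', key N σ x < ∑ x ∈ A, key N σ x := by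
        by_cases hst : ∀ i : Fin (n + 1),
            (∀ a, IsInit (key N (σ ∘ i.succAbove)) (XNat n) (slice i A a)) ∧
              IsInit (key N (σ ∘ i.succAbove)) (PosNat n) (core i A)
        · exact exists_swap (by omega) hσ hAX hA (stable_of_init hAX hst) hin
        · obtain ⟨i, hi⟩ := not_forall.1 hst
          exact exists_compress hn hσ i (IH (hσ.comp_succAbove i)) hAX hA hi
      exact h4.trans (ih _ (hw ▸ h5) A' h1 h2 (hc.trans h3.symm) rfl)

/-! ### Transfer to integer points -/

/-- The inclusion of `ℕ^n` into `ℤ^n`. -/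
def toInt {n : ℕ} (x : Fin n → ℕ) : Fin n → ℤ := fun i => (x i : ℤ)

section Transfer

variable {n : ℕ}

lemma toInt_injective : Function.Injective (toInt (n := n)) := fun x y h =>
  funext fun i => by simpa [toInt] using congrFun h i

lemma exists_toInt {x : Fin n → ℤ} (hx : ∀ i, 0 ≤ x i) : ∃ x', toInt x' = x :=
  ⟨fun i => (x i).toNat, funext fun i => Int.toNat_of_nonneg (hx i)⟩

lemma toInt_update {x : Fin n → ℕ} {k : Fin n} :
    Function.update (toInt x) k 0 = toInt (Function.update x k 0) := by
  funext j
  by_cases h : j = k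
  · subst h; simp [toInt]
  · simp [toInt, h]

lemma toInt_mem_XSet {x : Fin n → ℕ} : toInt x ∈ XSet (Fin n) ↔ x ∈ XNat n := by
  simp [XSet, XNat, toInt]

/-- The natural points of `A`. -/
noncomputable def natPart (A : Finset (Fin n → ℤ)) : Finset (Fin n → ℕ) :=
  A.preimage toInt toInt_injective.injOn

lemma mem_natPart {A : Finset (Fin n → ℤ)} {x : Fin n → ℕ} : x ∈ natPart A ↔ toInt x ∈ A :=
  Finset.mem_preimage

lemma card_natPart {A : Finset (Fin n → ℤ)} (hA : ↑A ⊆ XSet (Fin n)) :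
    (natPart A).card = A.card := by
  classical
  rw [← Finset.card_image_of_injective (natPart A) toInt_injective]
  congr 1
  ext z
  rw [Finset.mem_image]
  constructor
  · rintro ⟨x, hx, rfl⟩; exact mem_natPart.1 hx
  · intro hz
    obtain ⟨x, rfl⟩ := exists_toInt (hA hz).1
    exact ⟨x, mem_natPart.2 hz, rfl⟩

lemma natPart_subset {A : Finset (Fin n → ℤ)} (hA : ↑A ⊆ XSet (Fin n)) :
    ↑(natPart A) ⊆ XNat n := fun _ hx => toInt_mem_XSet.1 (hA (mem_natPart.1 hx))

lemma ncard_SSet (hn : 2 ≤ n) (A : Finset (Fin n → ℤ)) :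
    (SSet A).ncard = (SFin (natPart A)).card := by
  have : SSet A = toInt '' ↑(SFin (natPart A)) := by
    ext z
    constructor
    · rintro ⟨hpos, hz⟩
      obtain ⟨x, rfl⟩ := exists_toInt fun i => (hpos i).le
      refine ⟨x, (mem_SFin hn).2 ⟨fun k => by simpa [toInt] using hpos k, fun k => ?_⟩, rfl⟩
      rw [mem_natPart, ← toInt_update]
      exact hz k
    · rintro ⟨x, hx, rfl⟩
      obtain ⟨hpos, hx⟩ := (mem_SFin hn).1 hx
      refine ⟨fun k => by simpa [toInt] using hpos k, fun k => ?_⟩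
      rw [toInt_update]
      exact mem_natPart.1 (hx k)
  rw [this, Set.ncard_image_of_injective _ toInt_injective, Set.ncard_coe_finset]

lemma labels_val : Labels n (fun i : Fin n => (i : ℕ)) := ⟨Fin.val_injective, fun i => i.2⟩

/-- The order of keys with labels `σ i = i` is contained in the balanced order. Both being total on
`ℕ^n`, they agree there, but only this direction is needed. -/
lemma balancedLT_of_key_lt {x y : Fin n → ℕ}
    (h : key n (fun i : Fin n => (i : ℕ)) x < key n (fun i : Fin n => (i : ℕ)) y) :
    balancedLT (toInt x) (toInt y) := by
  obtain ⟨p, hp, hT⟩ := exists_top_of_key_lt labels_val h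
  have hmem : ∀ i, i ∈ diffSet (toInt x) (toInt y) ↔ x i ≠ y i := by
    intro i; simp [diffSet, toInt]
  simp only [expo_lt_iff labels_val, ← not_lt (a := expo _ _ y p)] at hT
  refine ⟨fun he => ?_, ?_⟩
  · rw [toInt_injective he] at h; exact lt_irrefl _ h
  set s := diffSet (toInt x) (toInt y) with hs
  have hps : p ∈ s := (hmem p).2 hp.ne
  have hy : maxOn s (toInt y) = ((y p : ℤ) : WithBot ℤ) := by
    apply le_antisymm
    · refine Finset.max_le fun a ha => ?_
      obtain ⟨i, hi, rfl⟩ := Finset.mem_image.1 ha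
      have := (hT i ((hmem i).1 hi)).2
      simp only [toInt]
      exact_mod_cast (by omega : y i ≤ y p)
    · exact Finset.le_max (Finset.mem_image.2 ⟨p, hps, rfl⟩)
  have hx : maxOn s (toInt x) ≤ ((y p : ℤ) : WithBot ℤ) := by
    refine Finset.max_le fun a ha => ?_
    obtain ⟨i, hi, rfl⟩ := Finset.mem_image.1 ha
    have := (hT i ((hmem i).1 hi)).1
    simp only [toInt]
    exact_mod_cast (by omega : x i ≤ y p)
  rw [hy]
  rcases hx.lt_or_eq with hlt | heq
  · exact Or.inl hlt
  refine Or.inr ⟨heq, ?_⟩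
  have h1 : (p : WithBot (Fin n)) ≤ argmaxOn s (toInt y) :=
    Finset.le_max (Finset.mem_filter.2 ⟨hps, by rw [hy]; rfl⟩)
  refine lt_of_lt_of_le ?_ h1
  have h2 : ∀ i ∈ s.filter (fun i => (toInt x i : WithBot ℤ) = maxOn s (toInt x)), i < p := by
    intro i hi
    obtain ⟨his, hi⟩ := Finset.mem_filter.1 hi
    rw [heq] at hi
    have hi' : x i = y p := by
      have : toInt x i = (y p : ℤ) := WithBot.coe_injective hi
      simpa [toInt] using this
    have := (hT i ((hmem i).1 his)).1
    exact Fin.lt_def.2 (by omega)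
  unfold argmaxOn
  rcases hm : (s.filter fun i => (toInt x i : WithBot ℤ) = maxOn s (toInt x)).max with _ | j
  · exact WithBot.bot_lt_coe p
  · exact WithBot.coe_lt_coe.2 (h2 j (Finset.mem_of_max hm))

end Transfer

/-- For every `n ≥ 2`, initial segments of the balanced order maximise
`|S(·)|` among down-sets in `X_n` of given size. -/
theorem initSeg_maximises_S (n : ℕ) (hn : 2 ≤ n)
    (A : Finset (Fin n → ℤ)) (hAX : ↑A ⊆ XSet (Fin n)) (hAdown : IsDownSet A)
    (I : Finset (Fin n → ℤ)) (hI : IsInitSeg I) (hcard : I.card = A.card) :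
    (SSet A).ncard ≤ (SSet I).ncard := by
  rw [ncard_SSet hn, ncard_SSet hn]
  refine card_SFin_le hn labels_val _ _ (natPart_subset hAX) ?_ ⟨natPart_subset hI.1, ?_⟩ ?_
  · intro x y hxy hy
    exact mem_natPart.2 (hAdown _ _ (fun i => Int.natCast_nonneg _)
      (fun i => Int.ofNat_le.2 (hxy i)) (mem_natPart.1 hy))
  · intro x hx y hy hlt
    exact mem_natPart.2 (hI.2 _ (mem_natPart.1 hx) _ (toInt_mem_XSet.2 hy)
      (balancedLT_of_key_lt hlt))
  · rw [card_natPart hAX, card_natPart hI.1, hcard]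

end ProjWA
end
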